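/- arXiv:0707.4197 — 5 statements merged into one kernel-verified Lean document; each statement's English description precedes it below -/
import Mathlib

section
/- Let φ: R → S be a flat local homomorphism of Noetherian local rings satisfying condition (†), and let M be a finitely generated R-module. The following are equivalent: (1) M has a compatible S-module structure; (2) S = φ(R) + PS for every minimal prime P of Supp_R(M); (3) S = φ(R) + PS for every P ∈ Supp_R(M). -/
/-- An R-module `M` "has an S-module structure compatible with its R-module
structure" if there is an S-scalar multiplication on `M` satisfying the module
axioms and with `r • x = φ(r) ∘ x` for all `r : R`, `x : M`. -/
def HasCompatibleSModule (R S M : Type*) [CommRing R] [CommRing S] [Algebra R S]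
    [AddCommGroup M] [Module R M] : Prop :=
  ∃ smul : S → M → M,
    (∀ x, smul 1 x = x) ∧
    (∀ s t x, smul (s * t) x = smul s (smul t x)) ∧
    (∀ s x y, smul s (x + y) = smul s x + smul s y) ∧
    (∀ s t x, smul (s + t) x = smul s x + smul t x) ∧
    (∀ r : R, ∀ x, smul (algebraMap R S r) x = r • x)

open IsLocalRing in
/-- If `(R, m) → (S, n)` is local with `mS = n` and trivial residue extension, then the `S`-cyclic
submodules of an `R`-finite `S`-module are `R`-cyclic. -/
theorem exists_smul_eq_smul_of_map_maximalIdeal {R S M : Type*} [CommRing R] [CommRing S]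
    [IsNoetherianRing R] [IsLocalRing R] [IsLocalRing S] [Algebra R S]
    (h1 : (maximalIdeal R).map (algebraMap R S) = maximalIdeal S)
    (h2 : ∀ s : S, ∃ r : R, s - algebraMap R S r ∈ maximalIdeal S)
    [AddCommGroup M] [Module R M] [Module S M] [IsScalarTower R S M] [Module.Finite R M]
    (s : S) (x : M) : ∃ r : R, s • x = r • x := by
  set N : Submodule R M := (Submodule.span S {x}).restrictScalars R with hN
  have key : ∀ t ∈ (maximalIdeal R).map (algebraMap R S), ∀ y ∈ N, t • y ∈ maximalIdeal R • N := by
    intro t ht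
    induction ht using Submodule.span_induction with
    | mem t ht =>
      obtain ⟨a, ha, rfl⟩ := ht
      intro y hy
      rw [algebraMap_smul]
      exact Submodule.smul_mem_smul ha hy
    | zero => intro y _; simp
    | add a b _ _ iha ihb =>
      intro y hy
      rw [add_smul]
      exact add_mem (iha y hy) (ihb y hy)
    | smul c t _ ih =>
      intro y hy
      rw [smul_eq_mul, mul_comm, mul_smul]
      exact ih _ (Submodule.smul_mem (Submodule.span S {x}) c hy)
  have hx : x ∈ N := Submodule.mem_span_singleton_self x
  have hle : N ≤ Submodule.span R {x} := by
    refine Submodule.le_of_le_smul_of_le_jacobson_bot (I := maximalIdeal R)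
      (IsNoetherian.noetherian N) (maximalIdeal_le_jacobson ⊥) fun y hy => ?_
    obtain ⟨c, rfl⟩ := Submodule.mem_span_singleton.mp hy
    obtain ⟨r, hr⟩ := h2 c
    rw [← h1] at hr
    have hsum : c • x = r • x + (c - algebraMap R S r) • x := by
      rw [sub_smul, algebraMap_smul]; abel
    rw [hsum]
    exact Submodule.add_mem_sup
      (Submodule.smul_mem _ r (Submodule.mem_span_singleton_self x)) (key _ hr x hx)
  obtain ⟨r, hr⟩ := Submodule.mem_span_singleton.mp
    (hle (Submodule.smul_mem (Submodule.span S {x}) s hx))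
  exact ⟨r, hr.symm⟩

open IsLocalRing in
/-- An ideal `K` of `S` with `S = φ(R) + K` is extended from `R`. -/
theorem Ideal.le_map_comap_of_map_maximalIdeal {R S : Type*} [CommRing R] [CommRing S]
    [IsNoetherianRing S] [IsLocalRing R] [IsLocalRing S] [Algebra R S]
    (h1 : (maximalIdeal R).map (algebraMap R S) = maximalIdeal S)
    (h2 : ∀ s : S, ∃ r : R, s - algebraMap R S r ∈ maximalIdeal S)
    (K : Ideal S) (hK : ∀ s : S, ∃ r : R, s - algebraMap R S r ∈ K) :
    K ≤ (K.comap (algebraMap R S)).map (algebraMap R S) := by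
  have key : ∀ t ∈ (maximalIdeal R).map (algebraMap R S),
      ∃ r : R, t - algebraMap R S r ∈ maximalIdeal S • K := by
    intro t ht
    induction ht using Submodule.span_induction with
    | mem t ht =>
      obtain ⟨a, -, rfl⟩ := ht
      exact ⟨a, by simp⟩
    | zero => exact ⟨0, by simp⟩
    | add a b _ _ iha ihb =>
      obtain ⟨r, hr⟩ := iha
      obtain ⟨r', hr'⟩ := ihb
      refine ⟨r + r', ?_⟩
      rw [map_add, add_sub_add_comm]
      exact add_mem hr hr'
    | smul c t ht ih =>
      obtain ⟨r, hr⟩ := ih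
      obtain ⟨d, hd⟩ := hK c
      refine ⟨d * r, ?_⟩
      have hsum : c • t - algebraMap R S (d * r) =
          t * (c - algebraMap R S d) + algebraMap R S d * (t - algebraMap R S r) := by
        rw [map_mul, smul_eq_mul]; ring
      rw [hsum]
      refine add_mem (Submodule.smul_mem_smul ?_ hd) (Ideal.mul_mem_left _ _ hr)
      rw [← h1]
      exact ht
  refine Submodule.le_of_le_smul_of_le_jacobson_bot (I := maximalIdeal S)
    (IsNoetherian.noetherian K) (maximalIdeal_le_jacobson ⊥) fun k hk => ?_
  obtain ⟨a, ha⟩ := h2 k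
  rw [← h1] at ha
  obtain ⟨b, hb⟩ := key _ ha
  have hsum : k - algebraMap R S a - algebraMap R S b = k - algebraMap R S (a + b) := by
    rw [map_add]; ring
  rw [hsum] at hb
  have hmem : algebraMap R S (a + b) ∈ K := by
    have := sub_mem hk (Submodule.smul_le_right hb)
    rwa [sub_sub_cancel] at this
  rw [← add_sub_cancel (algebraMap R S (a + b)) k]
  exact Submodule.add_mem_sup (Ideal.mem_map_of_mem _ hmem) hb

open IsLocalRing in
theorem exists_sub_mem_map_of_mem_support {R S M : Type*} [CommRing R] [CommRing S]
    [IsNoetherianRing R] [IsNoetherianRing S] [IsLocalRing R] [IsLocalRing S] [Algebra R S]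
    (h1 : (maximalIdeal R).map (algebraMap R S) = maximalIdeal S)
    (h2 : ∀ s : S, ∃ r : R, s - algebraMap R S r ∈ maximalIdeal S)
    [AddCommGroup M] [Module R M] [Module S M] [IsScalarTower R S M] [Module.Finite R M]
    {p : PrimeSpectrum R} (hp : p ∈ Module.support R M) (s : S) :
    ∃ r : R, s - algebraMap R S r ∈ p.asIdeal.map (algebraMap R S) := by
  obtain ⟨x, hx⟩ := Module.mem_support_iff_exists_annihilator.mp hp
  set K : Ideal S := (Submodule.span S {x}).annihilator
  have hK : ∀ s : S, ∃ r : R, s - algebraMap R S r ∈ K := fun s => by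
    obtain ⟨r, hr⟩ := exists_smul_eq_smul_of_map_maximalIdeal h1 h2 s x
    refine ⟨r, ?_⟩
    rw [Submodule.mem_annihilator_span_singleton, sub_smul, algebraMap_smul, hr, sub_self]
  obtain ⟨r, hr⟩ := hK s
  refine ⟨r, Ideal.map_mono (fun a ha => hx ?_)
    (Ideal.le_map_comap_of_map_maximalIdeal h1 h2 K hK hr)⟩
  rw [Ideal.mem_comap, Submodule.mem_annihilator_span_singleton, algebraMap_smul] at ha
  rwa [Submodule.mem_annihilator_span_singleton]

/-- The ideals `I` of `R` with `S = φ(R) + IS` form a submonoid. -/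
def Ideal.submonoidSurjectiveModMap (R S : Type*) [CommRing R] [CommRing S] [Algebra R S] :
    Submonoid (Ideal R) where
  carrier := {I | ∀ s : S, ∃ r : R, s - algebraMap R S r ∈ I.map (algebraMap R S)}
  one_mem' s := ⟨0, by simp [Ideal.one_eq_top, Ideal.map_top]⟩
  mul_mem' := by
    intro I J hI hJ s
    have key : ∀ t ∈ I.map (algebraMap R S),
        ∃ r : R, t - algebraMap R S r ∈ (I * J).map (algebraMap R S) := by
      intro t ht
      refine Submodule.span_induction (p := fun t _ =>
        ∃ r ∈ I, t - algebraMap R S r ∈ (I * J).map (algebraMap R S)) ?_ ?_ ?_ ?_ ht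
        |>.imp fun r hr => hr.2
      · rintro _ ⟨a, ha, rfl⟩
        exact ⟨a, ha, by simp⟩
      · exact ⟨0, I.zero_mem, by simp⟩
      · rintro a b _ _ ⟨r, hrI, hr⟩ ⟨r', hrI', hr'⟩
        refine ⟨r + r', add_mem hrI hrI', ?_⟩
        rw [map_add, add_sub_add_comm]
        exact add_mem hr hr'
      · rintro c t _ ⟨r, hrI, hr⟩
        obtain ⟨d, hd⟩ := hJ c
        refine ⟨d * r, I.mul_mem_left _ hrI, ?_⟩
        have hsum : c • t - algebraMap R S (d * r) =
            algebraMap R S r * (c - algebraMap R S d) + c * (t - algebraMap R S r) := by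
          rw [map_mul, smul_eq_mul]; ring
        rw [hsum]
        refine add_mem ?_ (Ideal.mul_mem_left _ _ hr)
        rw [Ideal.map_mul]
        exact Ideal.mul_mem_mul (Ideal.mem_map_of_mem _ hrI) hd
    obtain ⟨a, ha⟩ := hI s
    obtain ⟨b, hb⟩ := key _ ha
    exact ⟨a + b, by rwa [map_add, ← sub_sub]⟩

theorem Ideal.exists_sub_mem_map_of_minimalPrimes {R S : Type*} [CommRing R] [CommRing S]
    [IsNoetherianRing R] [Algebra R S] (I : Ideal R)
    (h : ∀ p ∈ I.minimalPrimes, ∀ s : S, ∃ r : R,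
      s - algebraMap R S r ∈ p.map (algebraMap R S)) (s : S) :
    ∃ r : R, s - algebraMap R S r ∈ I.map (algebraMap R S) := by
  have hfin := I.finite_minimalPrimes_of_isNoetherianRing R
  obtain ⟨n, hn⟩ := I.exists_radical_pow_le_of_fg (IsNoetherian.noetherian _)
  have hprod : ∏ p ∈ hfin.toFinset, p ≤ I.radical := by
    rw [← Ideal.sInf_minimalPrimes]
    refine le_sInf fun p hp => Ideal.prod_le_inf.trans ?_
    exact Finset.inf_le (f := fun p : Ideal R => p) (hfin.mem_toFinset.mpr hp)
  have hmem : (∏ p ∈ hfin.toFinset, p) ^ n ∈ Ideal.submonoidSurjectiveModMap R S :=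
    Submonoid.pow_mem _ (Submonoid.prod_mem _ fun p hp =>
      show p ∈ Ideal.submonoidSurjectiveModMap R S from h p (hfin.mem_toFinset.mp hp)) n
  obtain ⟨r, hr⟩ := hmem s
  exact ⟨r, Ideal.map_mono ((Ideal.pow_right_mono hprod n).trans hn) hr⟩

theorem hasCompatibleSModule_of_annihilator {R S M : Type*} [CommRing R] [CommRing S]
    [Algebra R S] [Module.FaithfullyFlat R S] [AddCommGroup M] [Module R M]
    (h : ∀ s : S, ∃ r : R,
      s - algebraMap R S r ∈ (Module.annihilator R M).map (algebraMap R S)) :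
    HasCompatibleSModule R S M := by
  choose f hf using h
  have key : ∀ (s : S) (r : R),
      s - algebraMap R S r ∈ (Module.annihilator R M).map (algebraMap R S) →
      ∀ x : M, f s • x = r • x := by
    intro s r hr x
    have hmem : r - f s ∈ Module.annihilator R M := by
      rw [← Ideal.comap_map_eq_self_of_faithfullyFlat (B := S) (Module.annihilator R M),
        Ideal.mem_comap, map_sub]
      have := sub_mem (hf s) hr
      rwa [sub_sub_sub_cancel_left] at this
    have := Module.mem_annihilator.mp hmem x
    rw [sub_smul, sub_eq_zero] at this
    exact this.symm
  refine ⟨fun s x => f s • x, fun x => ?_, fun s t x => ?_, fun s x y => smul_add _ _ _,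
    fun s t x => ?_, fun r x => key _ r (by simp) x⟩
  · simpa using key 1 1 (by simp) x
  · beta_reduce
    rw [smul_smul]
    refine key _ _ ?_ x
    have hsum : s * t - algebraMap R S (f s * f t) =
        t * (s - algebraMap R S (f s)) + algebraMap R S (f s) * (t - algebraMap R S (f t)) := by
      rw [map_mul]; ring
    rw [hsum]
    exact add_mem (Ideal.mul_mem_left _ _ (hf s)) (Ideal.mul_mem_left _ _ (hf t))
  · beta_reduce
    rw [← add_smul]
    refine key _ _ ?_ x
    rw [map_add, add_sub_add_comm]
    exact add_mem (hf s) (hf t)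

theorem Module.minimal_mem_support_of_mem_minimalPrimes_annihilator {R M : Type*} [CommRing R]
    [AddCommGroup M] [Module R M] [Module.Finite R M] {p : Ideal R}
    (hp : p ∈ (Module.annihilator R M).minimalPrimes) :
    Minimal (· ∈ Module.support R M) (⟨p, hp.1.1⟩ : PrimeSpectrum R) := by
  refine ⟨?_, fun q hq hle => ?_⟩
  · exact Module.mem_support_iff_of_finite.mpr hp.1.2
  · exact hp.2 ⟨q.2, Module.mem_support_iff_of_finite.mp hq⟩ hle

theorem HasCompatibleSModule.exists_module {R S M : Type*} [CommRing R] [CommRing S]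
    [Algebra R S] [AddCommGroup M] [Module R M] (h : HasCompatibleSModule R S M) :
    ∃ _ : Module S M, IsScalarTower R S M := by
  obtain ⟨smul, h_one, h_mul, h_add, add_h, h_alg⟩ := h
  let inst : Module S M :=
    { smul := smul
      one_smul := h_one
      mul_smul := h_mul
      smul_add := h_add
      add_smul := add_h
      smul_zero := fun s => by
        have := h_add s 0 0
        rw [add_zero] at this
        exact left_eq_add.mp this
      zero_smul := fun x => by
        have := h_alg 0 x
        rwa [map_zero, zero_smul] at this }
  exact ⟨inst, IsScalarTower.of_algebraMap_smul h_alg⟩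

theorem stmt_13 (R S : Type*) [CommRing R] [CommRing S]
    [IsNoetherianRing R] [IsNoetherianRing S] [IsLocalRing R] [IsLocalRing S]
    [Algebra R S] [Module.Flat R S] [IsLocalHom (algebraMap R S)]
    (h1 : (IsLocalRing.maximalIdeal R).map (algebraMap R S) = IsLocalRing.maximalIdeal S)
    (h2 : ∀ s : S, ∃ r : R, s - algebraMap R S r ∈ IsLocalRing.maximalIdeal S)
    (M : Type*) [AddCommGroup M] [Module R M] [Module.Finite R M] :
    (HasCompatibleSModule R S M ↔
      (∀ p : PrimeSpectrum R, Minimal (· ∈ Module.support R M) p →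
        ∀ s : S, ∃ r : R, s - algebraMap R S r ∈ p.asIdeal.map (algebraMap R S))) ∧
    ((∀ p : PrimeSpectrum R, Minimal (· ∈ Module.support R M) p →
        ∀ s : S, ∃ r : R, s - algebraMap R S r ∈ p.asIdeal.map (algebraMap R S)) ↔
      (∀ p ∈ Module.support R M,
        ∀ s : S, ∃ r : R, s - algebraMap R S r ∈ p.asIdeal.map (algebraMap R S))) := by
  have one_three : HasCompatibleSModule R S M → ∀ p ∈ Module.support R M,
      ∀ s : S, ∃ r : R, s - algebraMap R S r ∈ p.asIdeal.map (algebraMap R S) := by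
    intro h p hp s
    obtain ⟨_, _⟩ := h.exists_module
    exact exists_sub_mem_map_of_mem_support h1 h2 hp s
  have two_one : (∀ p : PrimeSpectrum R, Minimal (· ∈ Module.support R M) p →
      ∀ s : S, ∃ r : R, s - algebraMap R S r ∈ p.asIdeal.map (algebraMap R S)) →
      HasCompatibleSModule R S M := by
    intro h
    have : Module.FaithfullyFlat R S := Module.FaithfullyFlat.of_flat_of_isLocalHom
    refine hasCompatibleSModule_of_annihilator (Ideal.exists_sub_mem_map_of_minimalPrimes _ ?_)
    intro p hp
    exact h ⟨p, hp.1.1⟩ (Module.minimal_mem_support_of_mem_minimalPrimes_annihilator hp)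
  exact ⟨⟨fun h p hp => one_three h p hp.1, two_one⟩,
    ⟨fun h => one_three (two_one h), fun h p hp => h p hp.1⟩⟩
end

section
/- Let φ: R → S be a flat local homomorphism of Noetherian local rings satisfying condition (†), and let M be a finitely generated R-module that admits an S-module structure compatible with its R-module structure via φ. Then Ext^i_R(S, M) = 0 for all i > 0. -/
open CategoryTheory

open TensorProduct

section ExactSequences

variable {R K P F : Type*} [CommRing R] [AddCommGroup K] [Module R K] [AddCommGroup P] [Module R P]
  [AddCommGroup F] [Module R F] {i : K →ₗ[R] P} {g : P →ₗ[R] F}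

/-- In a short exact sequence `0 → K → P → F → 0` with `P` and `F` flat, `K` is flat. -/
theorem Module.Flat.of_shortExact [Module.Flat R P] [Module.Flat R F]
    (hi : Function.Injective i) (hig : Function.Exact i g) (hg : Function.Surjective g) :
    Module.Flat R K := by
  rw [Module.Flat.iff_rTensor_preserves_injective_linearMap]
  intro N N' _ _ _ _ u hu
  have h1 := LinearMap.lTensor_injective_of_exact_of_flat g hg i hi hig N
  have h2 := Module.Flat.rTensor_preserves_injective_linearMap (M := P) u hu
  have h3 : i.lTensor N' ∘ₗ u.rTensor K = u.rTensor P ∘ₗ i.lTensor N := by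
    rw [LinearMap.lTensor_comp_rTensor, LinearMap.rTensor_comp_lTensor]
  have h4 : Function.Injective (i.lTensor N' ∘ₗ u.rTensor K) := by
    rw [h3]
    exact h2.comp h1
  exact Function.Injective.of_comp (f := i.lTensor N') h4

variable (A : Type*) [CommRing A] [Algebra R A]

/-- A short exact sequence with flat cokernel splits after base change to an algebra over which
the cokernel becomes projective. -/
theorem LinearMap.exists_leftInverse_baseChange [Module.Flat R F]
    [Module.Projective A (TensorProduct R A F)] (hi : Function.Injective i)
    (hig : Function.Exact i g) (hg : Function.Surjective g) :
    ∃ l, l ∘ₗ i.baseChange A = LinearMap.id := by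
  have hinj : Function.Injective (i.baseChange A) :=
    LinearMap.lTensor_injective_of_exact_of_flat g hg i hi hig A
  have hex : Function.Exact (i.baseChange A) (g.baseChange A) := lTensor_exact A hig hg
  have hsurj : Function.Surjective (g.baseChange A) := LinearMap.lTensor_surjective A hg
  exact ((hex.split_tfae hinj hsurj).out 0 1).1
    (Module.projective_lifting_property (g.baseChange A) LinearMap.id hsurj)

/-- If `i` splits after base change to `A`, then linear maps into `A`-modules extend along `i`. -/
theorem LinearMap.exists_extend_of_leftInverse_baseChange {M : Type*} [AddCommGroup M] [Module R M]
    [Module A M] [IsScalarTower R A M] {l : TensorProduct R A P →ₗ[A] TensorProduct R A K}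
    (hl : l ∘ₗ i.baseChange A = LinearMap.id) (f : K →ₗ[R] M) : ∃ h : P →ₗ[R] M, h ∘ₗ i = f := by
  refine ⟨(f.liftBaseChange A ∘ₗ l).restrictScalars R ∘ₗ TensorProduct.mk R A P 1, ?_⟩
  ext x
  have hx : l (1 ⊗ₜ[R] i x) = 1 ⊗ₜ[R] x := by simpa using LinearMap.congr_fun hl (1 ⊗ₜ[R] x)
  simp [hx]

/-- A linear map factors through a surjective linear map with smaller kernel. -/
theorem LinearMap.exists_comp_eq_of_ker_le {M : Type*} [AddCommGroup M] [Module R M]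
    (hg : Function.Surjective g) {x : P →ₗ[R] M} (hker : LinearMap.ker g ≤ LinearMap.ker x) :
    ∃ f : F →ₗ[R] M, f ∘ₗ g = x := by
  refine ⟨(LinearMap.ker g).liftQ x hker ∘ₗ (g.quotKerEquivOfSurjective hg).symm.toLinearMap, ?_⟩
  ext y
  simp [LinearMap.quotKerEquivOfSurjective_symm_apply]

end ExactSequences

/-- If `F` is flat over `R` and `A ⊗ F` is projective over `A`, the image of each differential in
a projective resolution of `F` has the same properties, and its inclusion into the
ambient projective module splits after base change to `A`. -/
theorem CategoryTheory.ProjectiveResolution.flat_range_d {R : Type} [CommRing R] (A : Type)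
    [CommRing A] [Algebra R A] {F : Type} [AddCommGroup F] [Module R F] [Module.Flat R F]
    [Module.Projective A (TensorProduct R A F)] (P : ProjectiveResolution (ModuleCat.of R F))
    (n : ℕ) :
    Module.Flat R (LinearMap.range (P.complex.d (n + 1) n).hom) ∧
    Module.Projective A (TensorProduct R A (LinearMap.range (P.complex.d (n + 1) n).hom)) ∧
    ∃ l, l ∘ₗ (LinearMap.range (P.complex.d (n + 1) n).hom).subtype.baseChange A =
      LinearMap.id := by
  have hP (n : ℕ) : Module.Projective R (P.complex.X n) :=
    (IsProjective.iff_projective _).2 (P.projective n)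
  have step (n : ℕ) {G : Type} [AddCommGroup G] [Module R G] [Module.Flat R G]
      [Module.Projective A (TensorProduct R A G)] (g : P.complex.X n →ₗ[R] G)
      (hg : Function.Surjective g)
      (hker : LinearMap.ker g = LinearMap.range (P.complex.d (n + 1) n).hom) :
      Module.Flat R (LinearMap.range (P.complex.d (n + 1) n).hom) ∧
      Module.Projective A (TensorProduct R A (LinearMap.range (P.complex.d (n + 1) n).hom)) ∧
      ∃ l, l ∘ₗ (LinearMap.range (P.complex.d (n + 1) n).hom).subtype.baseChange A =
        LinearMap.id := by
    have hi := (LinearMap.range (P.complex.d (n + 1) n).hom).injective_subtype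
    have hig : Function.Exact (LinearMap.range (P.complex.d (n + 1) n).hom).subtype g := by
      rw [LinearMap.exact_iff, hker, Submodule.range_subtype]
    obtain ⟨l, hl⟩ := LinearMap.exists_leftInverse_baseChange A hi hig hg
    exact ⟨.of_shortExact hi hig hg, .of_split _ _ hl, l, hl⟩
  induction n with
  | zero =>
    let π : P.complex.X 0 →ₗ[R] F := (P.π.f 0).hom
    exact step 0 π ((ModuleCat.epi_iff_surjective (P.π.f 0)).1 inferInstance)
      ((ShortComplex.moduleCat_exact_iff_range_eq_ker _).1 P.exact₀).symm
  | succ n ih =>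
    obtain ⟨h1, h2, -⟩ := ih
    refine step (n + 1) (P.complex.d (n + 1) n).hom.rangeRestrict
      (LinearMap.surjective_rangeRestrict _) ?_
    rw [LinearMap.ker_rangeRestrict]
    exact ((ShortComplex.moduleCat_exact_iff_range_eq_ker _).1 (P.exact_succ n)).symm

/-- If `F` is flat over `R` and `A ⊗ F` is projective over `A`, then `Ext^i_R(F, M) = 0` for all
`A`-modules `M` and `i > 0`. -/
theorem subsingleton_Ext_of_projective_baseChange {R : Type} [CommRing R] (A : Type)
    [CommRing A] [Algebra R A] (F M : Type) [AddCommGroup F] [Module R F] [Module.Flat R F]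
    [Module.Projective A (TensorProduct R A F)] [AddCommGroup M] [Module R M] [Module A M]
    [IsScalarTower R A M] (n : ℕ) :
    Subsingleton (((Ext R (ModuleCat R) (n + 1)).obj (Opposite.op (ModuleCat.of R F))).obj
      (ModuleCat.of R M)) := by
  obtain ⟨P⟩ : Nonempty (ProjectiveResolution (ModuleCat.of R F)) := HasProjectiveResolution.out
  rw [← ModuleCat.isZero_iff_subsingleton]
  refine Limits.IsZero.of_iso ?_ (P.isoExt (n + 1) (ModuleCat.of R M))
  rw [← HomologicalComplex.exactAt_iff_isZero_homology,
    HomologicalComplex.exactAt_iff' _ n (n + 1) (n + 2) (by simp) (by simp),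
    ShortComplex.moduleCat_exact_iff]
  intro (x : P.complex.X (n + 1) ⟶ ModuleCat.of R M) hx
  replace hx : P.complex.d (n + 2) (n + 1) ≫ x = 0 := hx
  obtain ⟨-, -, l, hl⟩ := P.flat_range_d A n
  have hker : LinearMap.ker (P.complex.d (n + 1) n).hom.rangeRestrict ≤ LinearMap.ker x.hom := by
    rw [LinearMap.ker_rangeRestrict]
    refine ((ShortComplex.moduleCat_exact_iff_range_eq_ker _).1 (P.exact_succ n)).ge.trans ?_
    rintro _ ⟨y, rfl⟩
    exact LinearMap.congr_fun (congrArg ModuleCat.Hom.hom hx) y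
  obtain ⟨f, hf⟩ : ∃ f, f ∘ₗ (P.complex.d (n + 1) n).hom.rangeRestrict = x.hom :=
    LinearMap.exists_comp_eq_of_ker_le (LinearMap.surjective_rangeRestrict _) hker
  obtain ⟨h, hh⟩ := LinearMap.exists_extend_of_leftInverse_baseChange A hl f
  refine ⟨ModuleCat.ofHom h, ?_⟩
  change P.complex.d (n + 1) n ≫ ModuleCat.ofHom h = x
  ext y
  rw [← hf, ← hh]
  rfl

/-- A compatible `S`-module structure, as an `R`-algebra homomorphism `S → End_R(M)`. -/
theorem HasCompatibleSModule.exists_algHom {R S M : Type*} [CommRing R] [CommRing S] [Algebra R S]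
    [AddCommGroup M] [Module R M] (hM : HasCompatibleSModule R S M) :
    Nonempty (S →ₐ[R] Module.End R M) := by
  obtain ⟨smul, h_one, h_mul, h_add, add_h, h_alg⟩ := hM
  let ρ (s : S) : Module.End R M :=
    { toFun := smul s
      map_add' := h_add s
      map_smul' := fun r x ↦ by
        rw [← h_alg, ← h_mul, mul_comm, h_mul, h_alg, RingHom.id_apply] }
  have ρ_zero : ρ 0 = 0 := by
    ext x
    have h := add_h 0 0 x
    rw [add_zero] at h
    exact left_eq_add.1 h
  exact ⟨{
    toFun := ρ
    map_one' := LinearMap.ext h_one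
    map_mul' := fun s t ↦ LinearMap.ext (h_mul s t)
    map_zero' := ρ_zero
    map_add' := fun s t ↦ LinearMap.ext (add_h s t)
    commutes' := fun r ↦ LinearMap.ext (h_alg r) }⟩

section LocalRings

open IsLocalRing

variable {R S M : Type*} [CommRing R] [CommRing S] [IsNoetherianRing R] [IsLocalRing R]
  [IsLocalRing S] [Algebra R S] [AddCommGroup M] [Module R M] [Module.Finite R M]

/-- If `S = R + mS`, every element of `S` acts on `M` as a scalar of `R`. -/
theorem AlgHom.exists_smul_one_of_local
    (h1 : (maximalIdeal R).map (algebraMap R S) = maximalIdeal S)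
    (h2 : ∀ s : S, ∃ r : R, s - algebraMap R S r ∈ maximalIdeal S)
    (ρ : S →ₐ[R] Module.End R M) (s : S) : ∃ r : R, ρ s = r • 1 := by
  let T : Submodule R (Module.End R M) := LinearMap.range ρ.toLinearMap
  have hT : T ≤ Submodule.span R {1} ⊔ maximalIdeal R • T := by
    rintro _ ⟨t, rfl⟩
    obtain ⟨r, hr⟩ := h2 t
    have key : ∀ u ∈ maximalIdeal S, ρ u ∈ maximalIdeal R • T := by
      intro u hu
      rw [← h1, ← Submodule.restrictScalars_mem R, ← Ideal.smul_top_eq_map] at hu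
      have := Submodule.mem_map_of_mem (f := ρ.toLinearMap) hu
      rwa [Submodule.map_smul'', Submodule.map_top] at this
    have : ρ t = r • 1 + ρ (t - algebraMap R S r) := by
      rw [map_sub, AlgHom.commutes, Algebra.algebraMap_eq_smul_one]; abel
    change ρ t ∈ _
    rw [this]
    exact Submodule.add_mem_sup (Submodule.smul_mem _ _ (Submodule.mem_span_singleton_self 1))
      (key _ hr)
  have hfg : T.FG := IsNoetherian.noetherian T
  have hle := Submodule.le_of_le_smul_of_le_jacobson_bot hfg
    (maximalIdeal_le_jacobson _) hT
  obtain ⟨r, hr⟩ := Submodule.mem_span_singleton.1 (hle ⟨s, rfl⟩)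
  exact ⟨r, hr.symm⟩

/-- The annihilator of `M` in `S` is extended from the annihilator of `M` in `R`. -/
theorem AlgHom.ker_le_map_annihilator [IsNoetherianRing S] [Nontrivial M]
    (h1 : (maximalIdeal R).map (algebraMap R S) = maximalIdeal S)
    (h2 : ∀ s : S, ∃ r : R, s - algebraMap R S r ∈ maximalIdeal S)
    (ρ : S →ₐ[R] Module.End R M) :
    RingHom.ker ρ ≤ (Module.annihilator R M).map (algebraMap R S) := by
  let J : Ideal S := RingHom.ker ρ
  have hn : ∀ u ∈ maximalIdeal S, ∃ r : R, u - algebraMap R S r ∈ maximalIdeal S * J := by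
    intro u hu
    rw [← h1] at hu
    induction hu using Submodule.span_induction with
    | mem x hx =>
      obtain ⟨r, -, rfl⟩ := hx
      exact ⟨r, by simp⟩
    | zero => exact ⟨0, by simp⟩
    | add x y _ _ hx hy =>
      obtain ⟨a, ha⟩ := hx
      obtain ⟨b, hb⟩ := hy
      exact ⟨a + b, by simpa [add_sub_add_comm] using add_mem ha hb⟩
    | smul s x hx ih =>
      obtain ⟨a, ha⟩ := ih
      obtain ⟨r, hr⟩ := ρ.exists_smul_one_of_local h1 h2 s
      have hsr : s - algebraMap R S r ∈ J := by
        rw [RingHom.mem_ker, map_sub, hr, AlgHom.commutes, Algebra.algebraMap_eq_smul_one, sub_self]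
      refine ⟨r * a, ?_⟩
      have hsplit : s • x - algebraMap R S (r * a) =
          x * (s - algebraMap R S r) + algebraMap R S r * (x - algebraMap R S a) := by
        rw [map_mul, smul_eq_mul]
        ring
      rw [hsplit]
      exact add_mem (Ideal.mul_mem_mul (h1 ▸ hx) hsr) (Ideal.mul_mem_left _ _ ha)
  refine Submodule.le_of_le_smul_of_le_jacobson_bot (IsNoetherian.noetherian J)
    (maximalIdeal_le_jacobson _) fun j hj ↦ ?_
  have hjn : j ∈ maximalIdeal S := le_maximalIdeal (RingHom.ker_ne_top ρ) hj
  obtain ⟨r, hr⟩ := hn j hjn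
  have hrJ : algebraMap R S r ∈ J := by
    rw [← sub_sub_cancel j (algebraMap R S r)]
    exact sub_mem hj (Ideal.mul_le_right hr)
  have hrI : r ∈ Module.annihilator R M := by
    rw [Module.mem_annihilator]
    intro m
    have : ρ (algebraMap R S r) = 0 := hrJ
    rw [AlgHom.commutes] at this
    exact LinearMap.congr_fun this m
  rw [← sub_add_cancel j (algebraMap R S r), add_comm]
  exact Submodule.add_mem_sup (Ideal.mem_map_of_mem _ hrI) hr

/-- If `M` admits a compatible `S`-module structure, then `S` becomes free of rank one after base
change to `R ⧸ ann(M)`. -/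
theorem HasCompatibleSModule.projective_baseChange [IsNoetherianRing S]
    (h1 : (maximalIdeal R).map (algebraMap R S) = maximalIdeal S)
    (h2 : ∀ s : S, ∃ r : R, s - algebraMap R S r ∈ maximalIdeal S)
    (hM : HasCompatibleSModule R S M) :
    Module.Projective (R ⧸ Module.annihilator R M)
      (TensorProduct R (R ⧸ Module.annihilator R M) S) := by
  obtain ⟨ρ⟩ := hM.exists_algHom
  set I := Module.annihilator R M with hI
  rcases subsingleton_or_nontrivial M with hMs | hMn
  · have : Subsingleton (R ⧸ I) := by
      rw [Ideal.Quotient.subsingleton_iff, hI, Module.annihilator_eq_top_iff]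
      exact hMs
    have := Module.subsingleton (R ⧸ I) (TensorProduct R (R ⧸ I) S)
    infer_instance
  let B := TensorProduct R (R ⧸ I) S
  suffices Function.Bijective (Algebra.linearMap (R ⧸ I) B) from
    Module.Projective.of_equiv (LinearEquiv.ofBijective _ this)
  constructor
  · let f : R ⧸ I →ₐ[R] Module.End R M :=
      Ideal.Quotient.liftₐ I (Algebra.ofId R _) fun r hr ↦
        LinearMap.ext (Module.mem_annihilator.1 hr)
    have hcomm (a : R ⧸ I) (s : S) : Commute (f a) (ρ s) := by
      obtain ⟨r, rfl⟩ := Ideal.Quotient.mk_surjective a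
      exact Algebra.commutes r (ρ s)
    rw [injective_iff_map_eq_zero]
    intro a ha
    obtain ⟨r, rfl⟩ := Ideal.Quotient.mk_surjective a
    have hr := congrArg (Algebra.TensorProduct.lift f ρ hcomm) ha
    rw [Algebra.linearMap_apply, Algebra.TensorProduct.algebraMap_apply,
      Algebra.TensorProduct.lift_tmul, map_one, mul_one, map_zero] at hr
    rw [Ideal.Quotient.eq_zero_iff_mem, Module.mem_annihilator]
    exact LinearMap.congr_fun hr
  · intro x
    induction x using TensorProduct.induction_on with
    | zero => exact ⟨0, map_zero _⟩
    | add x y hx hy =>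
      obtain ⟨a, rfl⟩ := hx
      obtain ⟨b, rfl⟩ := hy
      exact ⟨a + b, map_add _ _ _⟩
    | tmul a s =>
      obtain ⟨r, hr⟩ := ρ.exists_smul_one_of_local h1 h2 s
      have hker : s - algebraMap R S r ∈ RingHom.ker ρ := by
        rw [RingHom.mem_ker, map_sub, hr, AlgHom.commutes, Algebra.algebraMap_eq_smul_one, sub_self]
      have hle : I.map (algebraMap R S) ≤
          RingHom.ker (Algebra.TensorProduct.includeRight : S →ₐ[R] B) := by
        rw [Ideal.map_le_iff_le_comap]
        intro r hr
        rw [Ideal.mem_comap, RingHom.mem_ker, AlgHom.commutes,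
          IsScalarTower.algebraMap_apply R (R ⧸ I), Ideal.Quotient.algebraMap_eq,
          Ideal.Quotient.eq_zero_iff_mem.2 hr, map_zero]
      have hs : (1 : R ⧸ I) ⊗ₜ[R] (s - algebraMap R S r) = 0 :=
        hle (ρ.ker_le_map_annihilator h1 h2 hker)
      rw [TensorProduct.tmul_sub, sub_eq_zero] at hs
      refine ⟨a * Ideal.Quotient.mk I r, ?_⟩
      calc algebraMap (R ⧸ I) B (a * Ideal.Quotient.mk I r)
          = a • (1 : R ⧸ I) ⊗ₜ[R] algebraMap R S r := by
            rw [Algebra.algebraMap_eq_smul_one r, TensorProduct.tmul_smul, TensorProduct.smul_tmul',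
              TensorProduct.smul_tmul', Algebra.TensorProduct.algebraMap_apply]
            congr 1
            simp [Algebra.smul_def]
        _ = a ⊗ₜ[R] s := by rw [← hs, TensorProduct.smul_tmul', smul_eq_mul, mul_one]

end LocalRings

theorem stmt_14 (R S : Type) [CommRing R] [CommRing S]
    [IsNoetherianRing R] [IsNoetherianRing S] [IsLocalRing R] [IsLocalRing S]
    [Algebra R S] [Module.Flat R S] [IsLocalHom (algebraMap R S)]
    (h1 : (IsLocalRing.maximalIdeal R).map (algebraMap R S) = IsLocalRing.maximalIdeal S)
    (h2 : ∀ s : S, ∃ r : R, s - algebraMap R S r ∈ IsLocalRing.maximalIdeal S)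
    (M : Type) [AddCommGroup M] [Module R M] [Module.Finite R M]
    (hM : HasCompatibleSModule R S M) :
    ∀ i : ℕ, 0 < i →
      Subsingleton
        (((Ext R (ModuleCat R) i).obj (Opposite.op (ModuleCat.of R S))).obj
          (ModuleCat.of R M)) := by
  intro i hi
  obtain ⟨n, rfl⟩ := Nat.exists_eq_add_one_of_ne_zero hi.ne'
  have := hM.projective_baseChange h1 h2
  let : Module (R ⧸ Module.annihilator R M) M :=
    (Module.isTorsionBySet_annihilator R M).module
  have : IsScalarTower R (R ⧸ Module.annihilator R M) M :=
    (Module.isTorsionBySet_annihilator R M).isScalarTower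
  exact subsingleton_Ext_of_projective_baseChange (R ⧸ Module.annihilator R M) S M n
end

section
/- Let φ: R → S be a flat local homomorphism of Noetherian local rings satisfying condition (†), and let M be a finitely generated R-module. If Ext^i_R(S, M) is finitely generated as an R-module for i = 1, …, dim_R(M), then the evaluation map Hom_R(S,M) → M, ψ ↦ ψ(1), is bijective (equivalently, M has a compatible S-module structure). -/
open CategoryTheory

universe u

/-- Postcomposition with `f : Y ⟶ Z`, as a morphism of cochain complexes `Hom(P, Y) ⟶ Hom(P, Z)`. -/
noncomputable def ChainComplex.linearYonedaMap {R : Type u} [CommRing R]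
    (P : ChainComplex (ModuleCat.{u} R) ℕ) {Y Z : ModuleCat.{u} R} (f : Y ⟶ Z) :
    P.linearYonedaObj R Y ⟶ P.linearYonedaObj R Z where
  f i := ModuleCat.ofHom (Linear.rightComp R (P.X i) f)
  comm' i j _ := by
    ext (x : P.X i ⟶ Y)
    exact (Category.assoc (P.d j i) x f).symm

lemma ChainComplex.shortExact_linearYonedaMap {R : Type u} [CommRing R]
    (P : ChainComplex (ModuleCat.{u} R) ℕ) [∀ n, Projective (P.X n)]
    {T : ShortComplex (ModuleCat.{u} R)} (hT : T.ShortExact) :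
    (ShortComplex.mk (P.linearYonedaMap T.f) (P.linearYonedaMap T.g) (by
      ext i (x : P.X i ⟶ T.X₁)
      exact (Category.assoc x T.f T.g).trans (by
        rw [T.zero, Limits.comp_zero]
        rfl))).ShortExact := by
  have := hT.mono_f
  have := hT.epi_g
  apply HomologicalComplex.shortExact_of_degreewise_shortExact
  intro i
  refine ShortComplex.ShortExact.mk' ?_ ?_ ?_
  · rw [ShortComplex.moduleCat_exact_iff]
    intro (x : P.X i ⟶ T.X₂) (hx : x ≫ T.g = 0)
    exact ⟨hT.exact.lift x hx, hT.exact.lift_f x hx⟩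
  · rw [ModuleCat.mono_iff_injective]
    intro (x : P.X i ⟶ T.X₁) (y : P.X i ⟶ T.X₁) (hxy : x ≫ T.f = y ≫ T.f)
    exact (cancel_mono T.f).mp hxy
  · rw [ModuleCat.epi_iff_surjective]
    intro (x : P.X i ⟶ T.X₃)
    exact ⟨Projective.factorThru x T.g, Projective.factorThru_comp x T.g⟩

lemma ChainComplex.exactAt_linearYonedaObj_iff {R : Type u} [CommRing R]
    (P : ChainComplex (ModuleCat.{u} R) ℕ) (Y : ModuleCat.{u} R) (n : ℕ) :
    (P.linearYonedaObj R Y).ExactAt (n + 1) ↔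
      ∀ x : P.X (n + 1) ⟶ Y, P.d (n + 2) (n + 1) ≫ x = 0 →
        ∃ y : P.X n ⟶ Y, P.d (n + 1) n ≫ y = x := by
  rw [HomologicalComplex.exactAt_iff' _ n (n + 1) (n + 2) (by simp) (by simp),
    ShortComplex.moduleCat_exact_iff]
  rfl

lemma ChainComplex.homologyMap_linearYonedaMap_smul {R : Type u} [CommRing R]
    (P : ChainComplex (ModuleCat.{u} R) ℕ) (Y : ModuleCat.{u} R) (r : R) (n : ℕ) :
    HomologicalComplex.homologyMap (P.linearYonedaMap (r • 𝟙 Y)) n = r • 𝟙 _ := by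
  have : P.linearYonedaMap (r • 𝟙 Y) = r • 𝟙 _ := by
    ext i (x : P.X i ⟶ Y)
    exact (Linear.comp_smul _ _ _ x r (𝟙 Y)).trans (by rw [Category.comp_id]; rfl)
  rw [this]
  have := ShortComplex.homologyMap_smul (𝟙 ((P.linearYonedaObj R Y).sc n)) r
  rw [ShortComplex.homologyMap_id] at this
  exact this

lemma Module.Flat.of_shortExact_s15 {R A B C : Type*} [CommRing R] [AddCommGroup A] [Module R A]
    [AddCommGroup B] [Module R B] [AddCommGroup C] [Module R C] [Module.Flat R B] [Module.Flat R C]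
    (f : A →ₗ[R] B) (g : B →ₗ[R] C) (hf : Function.Injective f) (hg : Function.Surjective g)
    (hfg : Function.Exact f g) : Module.Flat R A := by
  rw [Module.Flat.iff_rTensor_injective']
  intro N
  have h1 := LinearMap.lTensor_injective_of_exact_of_flat g hg f hf hfg N
  have h2 := Module.Flat.rTensor_preserves_injective_linearMap (M := B) N.subtype
    N.subtype_injective
  have h3 := h2.comp h1
  rw [← LinearMap.coe_comp, LinearMap.rTensor_comp_lTensor, ← LinearMap.lTensor_comp_rTensor] at h3
  exact Function.Injective.of_comp h3

lemma Submodule.mem_smul_of_flat_quotient {R B : Type*} [CommRing R]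
    [AddCommGroup B] [Module R B] (A : Submodule R B) [Module.Flat R (B ⧸ A)] (I : Ideal R)
    (a : B) (ha : a ∈ A) (ha' : a ∈ I • (⊤ : Submodule R B)) : a ∈ I • A := by
  have h1 := LinearMap.lTensor_injective_of_exact_of_flat A.mkQ A.mkQ_surjective A.subtype
    A.subtype_injective (LinearMap.exact_subtype_mkQ A) (R ⧸ I)
  have h2 : TensorProduct.tmul R (1 : R ⧸ I) (⟨a, ha⟩ : A) = 0 := by
    apply h1
    rw [map_zero, LinearMap.lTensor_tmul]
    apply (TensorProduct.quotTensorEquivQuotSMul B I).injective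
    rw [map_zero, Submodule.subtype_apply, TensorProduct.quotTensorEquivQuotSMul_mk_one_tmul]
    simpa using ha'
  have h3 := congrArg (TensorProduct.quotTensorEquivQuotSMul A I) h2
  rw [map_zero, TensorProduct.quotTensorEquivQuotSMul_mk_one_tmul] at h3
  have h4 : (⟨a, ha⟩ : A) ∈ I • (⊤ : Submodule R A) := by simpa using h3
  have h5 := Submodule.mem_map_of_mem (f := A.subtype) h4
  rw [Submodule.map_smul''] at h5
  simpa using h5

lemma CategoryTheory.ProjectiveResolution.exists_lift_of_exactAt {R : Type u} [CommRing R]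
    {X : ModuleCat.{u} R} (P : ProjectiveResolution X)
    {T : ShortComplex (ModuleCat.{u} R)} (hT : T.ShortExact)
    (h : (P.complex.linearYonedaObj R T.X₁).ExactAt 1) (ψ : X ⟶ T.X₃) :
    ∃ θ : X ⟶ T.X₂, θ ≫ T.g = ψ := by
  have := hT.mono_f
  have := hT.epi_g
  let p : P.complex.X 0 ⟶ X := P.π.f 0
  have hdp : P.complex.d 1 0 ≫ p = 0 := P.complex_d_comp_π_f_zero
  let θ₀ : P.complex.X 0 ⟶ T.X₂ := Projective.factorThru (p ≫ ψ) T.g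
  have hθ₀ : θ₀ ≫ T.g = p ≫ ψ := Projective.factorThru_comp _ _
  have h₀ : (P.complex.d 1 0 ≫ θ₀) ≫ T.g = 0 := by
    rw [Category.assoc, hθ₀, ← Category.assoc, hdp, Limits.zero_comp]
  obtain ⟨y, hy⟩ := (P.complex.exactAt_linearYonedaObj_iff T.X₁ 0).mp h (hT.exact.lift _ h₀) (by
    rw [← cancel_mono T.f, Category.assoc, hT.exact.lift_f, P.complex.d_comp_d_assoc]
    simp)
  have hy' : P.complex.d 1 0 ≫ (θ₀ - y ≫ T.f) = 0 := by
    rw [Preadditive.comp_sub, ← Category.assoc, hy, hT.exact.lift_f, sub_self]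
  have : Epi p := inferInstanceAs (Epi (P.π.f 0))
  obtain ⟨θ, hθ⟩ : ∃ θ : X ⟶ T.X₂, p ≫ θ = θ₀ - y ≫ T.f :=
    ⟨P.exact₀.desc _ hy', P.exact₀.g_desc _ hy'⟩
  refine ⟨θ, ?_⟩
  rw [← cancel_epi p, ← Category.assoc, hθ, Preadditive.sub_comp, hθ₀]
  simp

lemma LinearMap.exists_extend_of_smul_eq_zero {R A B N : Type*} [CommRing R]
    [AddCommGroup A] [Module R A] [AddCommGroup B] [Module R B] [AddCommGroup N] [Module R N]
    (I : Ideal R) [I.IsMaximal] (hN : ∀ r ∈ I, ∀ v : N, r • v = 0) (d : A →ₗ[R] B) (f : A →ₗ[R] N)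
    (h : ∀ a, d a ∈ I • (⊤ : Submodule R B) → f a = 0) : ∃ g : B →ₗ[R] N, g ∘ₗ d = f := by
  let _ : Field (R ⧸ I) := Ideal.Quotient.field I
  let _ : Module (R ⧸ I) N := Module.IsTorsionBySet.module (I := I) (fun v r => hN r r.2 v)
  have : IsScalarTower R (R ⧸ I) N :=
    Module.IsTorsionBySet.isScalarTower (I := I) (fun v r => hN r r.2 v)
  let p := (I • (⊤ : Submodule R B)).mkQ
  let e := p ∘ₗ d
  have hker : e.ker ≤ f.ker := fun a ha => h a (by simpa [e, p] using ha)
  obtain ⟨f', hf'⟩ : ∃ f' : e.range →ₗ[R] N, f' ∘ₗ e.rangeRestrict = f :=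
    ⟨(e.ker.liftQ f hker) ∘ₗ e.quotKerEquivRange.symm.toLinearMap, by
      ext a
      have : e.quotKerEquivRange.symm (e.rangeRestrict a) = e.ker.mkQ a := by
        rw [LinearEquiv.symm_apply_eq]; rfl
      simp [this]⟩
  let V : Submodule (R ⧸ I) (B ⧸ I • (⊤ : Submodule R B)) :=
    { e.range with
      smul_mem' := fun c x hx => by
        obtain ⟨c, rfl⟩ := Ideal.Quotient.mk_surjective c
        exact e.range.smul_mem c hx }
  let F : V →ₗ[R ⧸ I] N :=
    { toFun := fun v => f' ⟨v.1, v.2⟩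
      map_add' := fun x y => f'.map_add ⟨x.1, x.2⟩ ⟨y.1, y.2⟩
      map_smul' := fun c x => by
        obtain ⟨c, rfl⟩ := Ideal.Quotient.mk_surjective c
        exact (f'.map_smul c ⟨x.1, x.2⟩).trans (algebraMap_smul (R ⧸ I) c _).symm }
  obtain ⟨G, hG⟩ := LinearMap.exists_extend F
  refine ⟨G.restrictScalars R ∘ₗ p, ?_⟩
  ext a
  exact (LinearMap.congr_fun hG ⟨e a, a, rfl⟩).trans (LinearMap.congr_fun hf' a)

lemma CategoryTheory.ProjectiveResolution.flat_quotient_range {R : Type u} [CommRing R]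
    {X : ModuleCat.{u} R} [Module.Flat R X] (P : ProjectiveResolution X) (n : ℕ) :
    Module.Flat R (P.complex.X n ⧸ (P.complex.d (n + 1) n).hom.range) := by
  have hproj (i : ℕ) : Module.Flat R (P.complex.X i) := by
    have : Module.Projective R (P.complex.X i) :=
      (IsProjective.iff_projective _).mpr (P.projective i)
    infer_instance
  induction n with
  | zero =>
    let p : P.complex.X 0 ⟶ X := P.π.f 0
    have hp : Function.Surjective p :=
      (ModuleCat.epi_iff_surjective p).mp (inferInstanceAs (Epi (P.π.f 0)))
    have hr : (P.complex.d 1 0).hom.range = p.hom.ker := P.exact₀.moduleCat_range_eq_ker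
    exact Module.Flat.of_linearEquiv
      ((Submodule.quotEquivOfEq _ _ hr).trans (p.hom.quotKerEquivOfSurjective hp))
  | succ n ih =>
    have hr : (P.complex.d (n + 2) (n + 1)).hom.range = (P.complex.d (n + 1) n).hom.ker :=
      (P.exact_succ n).moduleCat_range_eq_ker
    let A := (P.complex.d (n + 1) n).hom.range
    have : Module.Flat R A := Module.Flat.of_shortExact_s15 A.subtype A.mkQ A.subtype_injective
      A.mkQ_surjective (LinearMap.exact_subtype_mkQ A)
    exact Module.Flat.of_linearEquiv
      ((Submodule.quotEquivOfEq _ _ hr).trans (P.complex.d (n + 1) n).hom.quotKerEquivRange)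

lemma CategoryTheory.ProjectiveResolution.exactAt_of_smul_eq_zero {R : Type u} [CommRing R]
    {X : ModuleCat.{u} R} [Module.Flat R X] (P : ProjectiveResolution X)
    (I : Ideal R) [I.IsMaximal] (N : ModuleCat.{u} R) (hN : ∀ r ∈ I, ∀ v : N, r • v = 0) (n : ℕ) :
    (P.complex.linearYonedaObj R N).ExactAt (n + 1) := by
  rw [ChainComplex.exactAt_linearYonedaObj_iff]
  intro x hx
  have := P.flat_quotient_range n
  have hI (M : Type u) [AddCommGroup M] [Module R M] (f : M →ₗ[R] N) :
      I • (⊤ : Submodule R M) ≤ f.ker :=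
    Submodule.smul_le.mpr fun r hr m _ => by simp [hN r hr]
  obtain ⟨g, hg⟩ := LinearMap.exists_extend_of_smul_eq_zero I hN (P.complex.d (n + 1) n).hom x.hom
    (fun a ha => by
      have h1 := Submodule.mem_smul_of_flat_quotient _ I _
        (LinearMap.mem_range_self (P.complex.d (n + 1) n).hom a) ha
      rw [LinearMap.range_eq_map, ← Submodule.map_smul''] at h1
      obtain ⟨b, hb, hab⟩ := h1
      have h2 : a - b ∈ (P.complex.d (n + 2) (n + 1)).hom.range := by
        rw [(P.exact_succ n).moduleCat_range_eq_ker]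
        simp [hab]
      obtain ⟨c, hc⟩ := h2
      have h3 : x (a - b) = 0 := by
        rw [← hc]
        exact ConcreteCategory.congr_hom hx c
      have h4 : x b = 0 := hI _ x.hom hb
      rw [map_sub, h4, sub_zero] at h3
      exact h3)
  exact ⟨ModuleCat.ofHom g, ModuleCat.hom_ext hg⟩

lemma Module.Finite.of_shortComplex_exact {R : Type u} [CommRing R] [IsNoetherianRing R]
    {T : ShortComplex (ModuleCat.{u} R)} (hT : T.Exact)
    (h₁ : Module.Finite R T.X₁) (h₃ : Module.Finite R T.X₃) :
    Module.Finite R T.X₂ :=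
  have := isNoetherian_of_range_eq_ker T.f.hom T.g.hom hT.moduleCat_range_eq_ker
  inferInstance

section Homology

variable {R : Type u} [CommRing R] (P : ChainComplex (ModuleCat.{u} R) ℕ)
  [∀ n, Projective (P.X n)] {T : ShortComplex (ModuleCat.{u} R)}

lemma ChainComplex.exactAt_linearYonedaObj_X₂ (hT : T.ShortExact) {n : ℕ}
    (h₁ : (P.linearYonedaObj R T.X₁).ExactAt n) (h₃ : (P.linearYonedaObj R T.X₃).ExactAt n) :
    (P.linearYonedaObj R T.X₂).ExactAt n := by
  rw [HomologicalComplex.exactAt_iff_isZero_homology] at h₁ h₃ ⊢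
  exact ((P.shortExact_linearYonedaMap hT).homology_exact₂ n).isZero_of_both_zeros
    (h₁.eq_of_src _ _) (h₃.eq_of_tgt _ _)

lemma ChainComplex.finite_homology_linearYonedaObj_X₃ [IsNoetherianRing R] (hT : T.ShortExact)
    {n : ℕ} (h₂ : Module.Finite R ((P.linearYonedaObj R T.X₂).homology n))
    (h₁ : Module.Finite R ((P.linearYonedaObj R T.X₁).homology (n + 1))) :
    Module.Finite R ((P.linearYonedaObj R T.X₃).homology n) :=
  Module.Finite.of_shortComplex_exact
    ((P.shortExact_linearYonedaMap hT).homology_exact₃ n (n + 1) (by simp)) h₂ h₁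

lemma ChainComplex.exactAt_linearYonedaObj_of_quotSMulTop [IsLocalRing R] {Y : ModuleCat.{u} R}
    {x : R} (hx : x ∈ IsLocalRing.maximalIdeal R) (reg : IsSMulRegular Y x) {n : ℕ}
    (hfin : Module.Finite R ((P.linearYonedaObj R Y).homology n))
    (h : (P.linearYonedaObj R (ModuleCat.of R (QuotSMulTop x Y))).ExactAt n) :
    (P.linearYonedaObj R Y).ExactAt n := by
  rw [HomologicalComplex.exactAt_iff_isZero_homology] at h ⊢
  have hex := (ShortComplex.moduleCat_exact_iff _).mp
    ((P.shortExact_linearYonedaMap reg.smulShortComplex_shortExact).homology_exact₂ n)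
  have hsurj (v : (P.linearYonedaObj R Y).homology n) : ∃ w, x • w = v := by
    obtain ⟨w, hw⟩ := hex v (by
      have := h.eq_of_tgt (HomologicalComplex.homologyMap
        (P.linearYonedaMap (ModuleCat.smulShortComplex Y x).g) n) 0
      exact ConcreteCategory.congr_hom this v)
    have hmap := ConcreteCategory.congr_hom (P.homologyMap_linearYonedaMap_smul Y x n) w
    exact ⟨w, hmap.symm.trans hw⟩
  have hbot := Submodule.eq_bot_of_le_smul_of_le_jacobson_bot (IsLocalRing.maximalIdeal R)
    (⊤ : Submodule R ((P.linearYonedaObj R Y).homology n)) hfin.fg_top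
    (fun v _ => by
      obtain ⟨w, rfl⟩ := hsurj v
      exact Submodule.smul_mem_smul hx trivial)
    (IsLocalRing.maximalIdeal_le_jacobson _)
  have : Subsingleton ((P.linearYonedaObj R Y).homology n) :=
    (Submodule.subsingleton_iff R).mp (subsingleton_of_bot_eq_top hbot.symm)
  exact ModuleCat.isZero_of_subsingleton _

end Homology

lemma CategoryTheory.ProjectiveResolution.eval_surjective_X₂ {R S : Type u} [CommRing R]
    [CommRing S] [Algebra R S]
    (P : ProjectiveResolution (ModuleCat.of R S)) {T : ShortComplex (ModuleCat.{u} R)}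
    (hT : T.ShortExact) (h : (P.complex.linearYonedaObj R T.X₁).ExactAt 1)
    (h₁ : Function.Surjective (fun ψ : S →ₗ[R] T.X₁ => ψ 1))
    (h₃ : Function.Surjective (fun ψ : S →ₗ[R] T.X₃ => ψ 1)) :
    Function.Surjective (fun ψ : S →ₗ[R] T.X₂ => ψ 1) := by
  intro v
  obtain ⟨ψ, hψ⟩ := h₃ (T.g v)
  obtain ⟨θ, hθ⟩ := P.exists_lift_of_exactAt hT h (ModuleCat.ofHom ψ)
  have hθv : T.g (v - θ 1) = 0 := by
    have : T.g (θ 1) = ψ 1 := ConcreteCategory.congr_hom hθ (1 : S)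
    rw [map_sub, this, sub_eq_zero]
    exact hψ.symm
  obtain ⟨w, hw⟩ := (ShortComplex.moduleCat_exact_iff _).mp hT.exact _ hθv
  obtain ⟨η, hη⟩ := h₁ w
  refine ⟨θ.hom + T.f.hom ∘ₗ η, ?_⟩
  have h1 : T.f (η 1) = v - θ 1 := by rw [← hw]; exact congrArg T.f hη
  change θ (1 : S) + T.f (η 1) = v
  rw [h1, add_sub_cancel]

section Residue

variable {R S : Type u} [CommRing R] [CommRing S] [IsLocalRing R] [IsLocalRing S] [Algebra R S]

lemma exists_sub_algebraMap_mem_smul_top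
    (h1 : (IsLocalRing.maximalIdeal R).map (algebraMap R S) = IsLocalRing.maximalIdeal S)
    (h2 : ∀ s : S, ∃ r : R, s - algebraMap R S r ∈ IsLocalRing.maximalIdeal S)
    (s : S) : ∃ r : R,
    s - algebraMap R S r ∈ IsLocalRing.maximalIdeal R • (⊤ : Submodule R S) := by
  obtain ⟨r, hr⟩ := h2 s
  refine ⟨r, ?_⟩
  rw [Ideal.smul_top_eq_map, h1]
  exact hr

lemma eval_injective [IsNoetherianRing R]
    (h1 : (IsLocalRing.maximalIdeal R).map (algebraMap R S) = IsLocalRing.maximalIdeal S)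
    (h2 : ∀ s : S, ∃ r : R, s - algebraMap R S r ∈ IsLocalRing.maximalIdeal S)
    (M : Type*) [AddCommGroup M] [Module R M]
    [Module.Finite R M] : Function.Injective (fun ψ : S →ₗ[R] M => ψ 1) := by
  suffices h : ∀ ψ : S →ₗ[R] M, ψ 1 = 0 → ψ = 0 from fun ψ χ hψχ =>
    sub_eq_zero.mp (h (ψ - χ) (sub_eq_zero.mpr hψχ))
  intro ψ hψ
  have key (n : ℕ) (s : S) : ψ s ∈ IsLocalRing.maximalIdeal R ^ n • (⊤ : Submodule R M) := by
    induction n generalizing s with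
    | zero => simp
    | succ n ih =>
      obtain ⟨r, hr⟩ := exists_sub_algebraMap_mem_smul_top h1 h2 s
      have hs : ψ s = ψ (s - algebraMap R S r) := by
        rw [map_sub, Algebra.algebraMap_eq_smul_one, map_smul, hψ, smul_zero, sub_zero]
      rw [hs, pow_succ', Submodule.mul_smul]
      have := Submodule.mem_map_of_mem (f := ψ) hr
      rw [Submodule.map_smul''] at this
      exact Submodule.smul_mono le_rfl (Submodule.map_le_iff_le_comap.mpr fun s _ => ih s) this
  ext s
  have := Ideal.iInf_pow_smul_eq_bot_of_isLocalRing (M := M) (IsLocalRing.maximalIdeal R)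
    Ideal.IsPrime.ne_top'
  have hs : ψ s ∈ (⊥ : Submodule R M) := by
    rw [← this]
    exact (Submodule.mem_iInf _).mpr fun n => key n s
  exact hs

lemma eval_surjective_of_smul_eq_zero [IsLocalHom (algebraMap R S)]
    (h1 : (IsLocalRing.maximalIdeal R).map (algebraMap R S) = IsLocalRing.maximalIdeal S)
    (N : Type*) [AddCommGroup N]
    [Module R N] (hN : ∀ r ∈ IsLocalRing.maximalIdeal R, ∀ v : N, r • v = 0) :
    Function.Surjective (fun ψ : S →ₗ[R] N => ψ 1) := by
  intro v
  obtain ⟨g, hg⟩ := LinearMap.exists_extend_of_smul_eq_zero (IsLocalRing.maximalIdeal R) hN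
    (Algebra.linearMap R S) (LinearMap.toSpanSingleton R N v) (fun a ha => by
      rw [Ideal.smul_top_eq_map, h1] at ha
      exact hN a ((IsLocalRing.mem_maximalIdeal a).mpr fun hu =>
        (IsLocalRing.mem_maximalIdeal _).mp ha (hu.map (algebraMap R S))) v)
  exact ⟨g, by simpa using LinearMap.congr_fun hg 1⟩

variable [IsNoetherianRing R] [Module.Flat R S] [IsLocalHom (algebraMap R S)]
  (P : ProjectiveResolution (ModuleCat.of R S))

lemma exists_submodule_exactAt_and_isSMulRegular_quotient
    (h1 : (IsLocalRing.maximalIdeal R).map (algebraMap R S) = IsLocalRing.maximalIdeal S)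
    (M : Type u) [AddCommGroup M]
    [Module R M] [Module.Finite R M] : ∃ N : Submodule R M,
      (∀ n, (P.complex.linearYonedaObj R (ModuleCat.of R N)).ExactAt (n + 1)) ∧
      Function.Surjective (fun ψ : S →ₗ[R] N => ψ 1) ∧
      ∃ x ∈ IsLocalRing.maximalIdeal R, IsSMulRegular (M ⧸ N) x := by
  have : Module.Flat R (ModuleCat.of R S) := ‹Module.Flat R S›
  obtain ⟨N, ⟨hN₁, hN₂⟩, hmax⟩ := set_has_maximal_iff_noetherian.mpr
    (inferInstance : IsNoetherian R M)
    {N | (∀ n, (P.complex.linearYonedaObj R (ModuleCat.of R N)).ExactAt (n + 1)) ∧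
      Function.Surjective (fun ψ : S →ₗ[R] N => ψ 1)}
    ⟨⊥, fun n => P.exactAt_of_smul_eq_zero (IsLocalRing.maximalIdeal R) _
      (fun r _ v => Subsingleton.elim (α := (⊥ : Submodule R M)) _ _) n,
      fun v => ⟨0, Subsingleton.elim _ _⟩⟩
  refine ⟨N, hN₁, hN₂, ?_⟩
  suffices h : Subsingleton ((R ⧸ IsLocalRing.maximalIdeal R) →ₗ[R] M ⧸ N) by
    rw [IsSMulRegular.subsingleton_linearMap_iff, Ideal.annihilator_quotient] at h
    exact h
  refine subsingleton_of_forall_eq 0 fun f => ?_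
  let L := f.range
  have hL (r : R) (hr : r ∈ IsLocalRing.maximalIdeal R) (v : L) : r • v = 0 := by
    obtain ⟨_, a, rfl⟩ := v
    ext
    have : r • a = 0 := by
      obtain ⟨a, rfl⟩ := Ideal.Quotient.mk_surjective a
      exact Ideal.Quotient.eq_zero_iff_mem.mpr (Ideal.mul_mem_right _ _ hr)
    change r • f a = 0
    rw [← map_smul, this, map_zero]
  let N' := L.comap N.mkQ
  have hle : N ≤ N' := fun v hv => by
    have : N.mkQ v = 0 := by simpa using hv
    simp only [N', Submodule.mem_comap, this, zero_mem]
  let q : N' →ₗ[R] L := N.mkQ.restrict fun _ hv => hv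
  have hT : (ShortComplex.mk (ModuleCat.ofHom (Submodule.inclusion hle)) (ModuleCat.ofHom q) (by
      ext v
      simp [q])).ShortExact := by
    refine ShortComplex.ShortExact.mk' ?_ ?_ ?_
    · rw [ShortComplex.moduleCat_exact_iff]
      rintro ⟨v, hv'⟩ hv
      exact ⟨⟨v, (Submodule.Quotient.mk_eq_zero N).mp (congrArg Subtype.val hv)⟩, rfl⟩
    · rw [ModuleCat.mono_iff_injective]
      exact Submodule.inclusion_injective hle
    · rw [ModuleCat.epi_iff_surjective]
      rintro ⟨v, hv⟩
      obtain ⟨w, rfl⟩ := N.mkQ_surjective v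
      exact ⟨⟨w, hv⟩, rfl⟩
  have hN' : N' = N := by
    refine (eq_of_le_of_not_lt hle (hmax N' ⟨fun n => ?_, ?_⟩)).symm
    · exact P.complex.exactAt_linearYonedaObj_X₂ hT (hN₁ n)
        (P.exactAt_of_smul_eq_zero (IsLocalRing.maximalIdeal R) _ hL n)
    · exact P.eval_surjective_X₂ hT (hN₁ 0) hN₂ (eval_surjective_of_smul_eq_zero h1 L hL)
  refine LinearMap.ext fun a => ?_
  obtain ⟨w, hw⟩ := N.mkQ_surjective (f a)
  have hwN : w ∈ N' := by
    change N.mkQ w ∈ f.range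
    rw [hw]
    exact LinearMap.mem_range_self f a
  rw [hN'] at hwN
  rw [← hw]
  simpa using hwN

open Pointwise in
lemma exactAt_one_and_eval_surjective
    (h1 : (IsLocalRing.maximalIdeal R).map (algebraMap R S) = IsLocalRing.maximalIdeal S)
    (d : ℕ) (M : Type u) [AddCommGroup M] [Module R M]
    [Module.Finite R M] (hdim : Module.supportDim R M < (d : WithBot ℕ∞))
    (hfin : ∀ i, i + 1 < d →
      Module.Finite R ((P.complex.linearYonedaObj R (ModuleCat.of R M)).homology (i + 1))) :
    (P.complex.linearYonedaObj R (ModuleCat.of R M)).ExactAt 1 ∧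
      Function.Surjective (fun ψ : S →ₗ[R] M => ψ 1) := by
  have : Module.Flat R (ModuleCat.of R S) := ‹Module.Flat R S›
  have hzero (M : Type u) [AddCommGroup M] [Module R M] [Subsingleton M] :
      (P.complex.linearYonedaObj R (ModuleCat.of R M)).ExactAt 1 ∧
        Function.Surjective (fun ψ : S →ₗ[R] M => ψ 1) :=
    ⟨P.exactAt_of_smul_eq_zero (IsLocalRing.maximalIdeal R) _
      (fun r _ v => Subsingleton.elim (α := M) _ _) 0, fun v => ⟨0, Subsingleton.elim _ _⟩⟩
  induction d generalizing M with
  | zero =>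
    have : Subsingleton M := by
      rw [← Module.supportDim_eq_bot_iff_subsingleton (R := R), ← WithBot.lt_coe_bot]
      exact hdim
    exact hzero M
  | succ d ih =>
    obtain ⟨N, hN₁, hN₂, x, hx, reg⟩ :=
      exists_submodule_exactAt_and_isSMulRegular_quotient P h1 M
    have hT : (ShortComplex.mk (ModuleCat.ofHom N.subtype) (ModuleCat.ofHom N.mkQ) (by
        ext v
        simp)).ShortExact := by
      refine ShortComplex.ShortExact.mk' ?_ ?_ ?_
      · exact ModuleCat.shortComplex_exact _ (LinearMap.exact_subtype_mkQ N)
      · exact (ModuleCat.mono_iff_injective _).mpr N.subtype_injective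
      · exact (ModuleCat.epi_iff_surjective _).mpr N.mkQ_surjective
    suffices h : (P.complex.linearYonedaObj R (ModuleCat.of R (M ⧸ N))).ExactAt 1 ∧
        Function.Surjective (fun ψ : S →ₗ[R] M ⧸ N => ψ 1) from
      ⟨P.complex.exactAt_linearYonedaObj_X₂ hT (hN₁ 0) h.1,
        P.eval_surjective_X₂ hT (hN₁ 0) hN₂ h.2⟩
    rcases subsingleton_or_nontrivial (M ⧸ N) with hs | hs
    · exact hzero _
    have hfin' (i : ℕ) (hi : i + 1 < d + 1) : Module.Finite R
        ((P.complex.linearYonedaObj R (ModuleCat.of R (M ⧸ N))).homology (i + 1)) := by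
      refine P.complex.finite_homology_linearYonedaObj_X₃ hT (hfin i hi) ?_
      have := ModuleCat.subsingleton_of_isZero (hN₁ (i + 1)).isZero_homology
      infer_instance
    have hdim' : Module.supportDim R (QuotSMulTop x (M ⧸ N)) < (d : WithBot ℕ∞) := by
      have hle := Module.supportDim_le_of_surjective N.mkQ N.mkQ_surjective
      have heq := Module.supportDim_quotSMulTop_succ_eq_supportDim reg hx
      have hlt := (heq.trans_le hle).trans_lt hdim
      push_cast at hlt
      exact lt_of_add_lt_add_right hlt
    have reg' : IsSMulRegular (ModuleCat.of R (M ⧸ N)) x := reg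
    have hT' := reg'.smulShortComplex_shortExact
    obtain ⟨hex, hsurj⟩ := ih (QuotSMulTop x (M ⧸ N)) hdim' fun i hi =>
      P.complex.finite_homology_linearYonedaObj_X₃ hT' (hfin' i (by omega))
        (hfin' (i + 1) (by omega))
    have hd : 0 < d := by
      by_contra hd
      obtain rfl : d = 0 := by omega
      have := nontrivial_quotSMulTop_of_mem_maximalIdeal (M ⧸ N) hx
      have : Subsingleton (QuotSMulTop x (M ⧸ N)) := by
        rw [← Module.supportDim_eq_bot_iff_subsingleton (R := R), ← WithBot.lt_coe_bot]
        exact hdim'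
      exact not_subsingleton _ this
    have hex' : (P.complex.linearYonedaObj R (ModuleCat.of R (M ⧸ N))).ExactAt 1 :=
      P.complex.exactAt_linearYonedaObj_of_quotSMulTop hx reg (hfin' 0 (by omega)) hex
    refine ⟨hex', ?_⟩
    let ev : (S →ₗ[R] M ⧸ N) →ₗ[R] M ⧸ N := LinearMap.applyₗ 1
    suffices h : (⊤ : Submodule R (M ⧸ N)) ≤ ev.range from
      fun v => h (Submodule.mem_top (x := v))
    refine Submodule.le_of_le_smul_of_le_jacobson_bot Module.Finite.fg_top
      (IsLocalRing.maximalIdeal_le_jacobson _) fun v _ => ?_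
    obtain ⟨ψ, hψ⟩ := hsurj (Submodule.Quotient.mk v)
    obtain ⟨θ, hθ⟩ := P.exists_lift_of_exactAt hT' hex' (ModuleCat.ofHom ψ)
    let t : S →ₗ[R] M ⧸ N := θ.hom
    have hv : (x • (⊤ : Submodule R (M ⧸ N))).mkQ (v - t 1) = 0 := by
      have : (x • (⊤ : Submodule R (M ⧸ N))).mkQ (t 1) = ψ 1 :=
        ConcreteCategory.congr_hom hθ (1 : S)
      rw [map_sub, this, sub_eq_zero]
      exact hψ.symm
    rw [Submodule.mkQ_apply, Submodule.Quotient.mk_eq_zero] at hv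
    rw [← add_sub_cancel (t 1) v]
    refine Submodule.add_mem_sup ⟨t, rfl⟩ ?_
    obtain ⟨w, -, hw⟩ := Submodule.mem_smul_pointwise_iff_exists _ _ _ |>.mp hv
    rw [← hw]
    exact Submodule.smul_mem_smul hx trivial

end Residue

theorem stmt_15 (R S : Type) [CommRing R] [CommRing S]
    [IsNoetherianRing R] [IsNoetherianRing S] [IsLocalRing R] [IsLocalRing S]
    [Algebra R S] [Module.Flat R S] [IsLocalHom (algebraMap R S)]
    (h1 : (IsLocalRing.maximalIdeal R).map (algebraMap R S) = IsLocalRing.maximalIdeal S)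
    (h2 : ∀ s : S, ∃ r : R, s - algebraMap R S r ∈ IsLocalRing.maximalIdeal S)
    (M : Type) [AddCommGroup M] [Module R M] [Module.Finite R M]
    (hext : ∀ i : ℕ, 1 ≤ i → (i : WithBot ℕ∞) ≤ Order.krullDim (Module.support R M) →
      Module.Finite R
        (((Ext R (ModuleCat R) i).obj (Opposite.op (ModuleCat.of R S))).obj
          (ModuleCat.of R M))) :
    Function.Bijective (fun ψ : S →ₗ[R] M => ψ 1) := by
  refine ⟨eval_injective h1 h2 M, ?_⟩
  rcases subsingleton_or_nontrivial M with hM | hM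
  · exact fun v => ⟨0, Subsingleton.elim _ _⟩
  let P := projectiveResolution (ModuleCat.of R S)
  obtain ⟨d, hd⟩ : ∃ d : ℕ, Module.supportDim R M = d := by
    have hbot := Module.supportDim_ne_bot_of_nontrivial R M
    have htop : Module.supportDim R M < ⊤ :=
      (Module.supportDim_le_ringKrullDim R M).trans_lt ringKrullDim_lt_top
    obtain ⟨e, he⟩ := WithBot.ne_bot_iff_exists.mp hbot
    rw [← he] at htop ⊢
    obtain ⟨d, rfl⟩ := ENat.ne_top_iff_exists.mp (WithBot.coe_lt_coe.mp htop).ne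
    exact ⟨d, rfl⟩
  refine (exactAt_one_and_eval_surjective P h1 (d + 1) M ?_ fun i hi => ?_).2
  · rw [hd]
    exact_mod_cast Nat.lt_succ_self d
  · have := hext (i + 1) (by omega) (by
      change _ ≤ Module.supportDim R M
      rw [hd]
      exact_mod_cast Nat.le_of_lt_succ hi)
    exact Module.Finite.equiv (P.isoExt (R := R) (i + 1) (ModuleCat.of R M)).toLinearEquiv
end

section
/- Let φ: R → S be a flat local homomorphism of Noetherian local rings satisfying condition (†), and let 0 → N₁ → N → N₂ → 0 be an exact sequence of finitely generated S-modules. If N₁ ≅ S ⊗_R M₁ and N₂ ≅ S ⊗_R M₂ are extended from finitely generated R-modules and Ext^1_S(N₂, N₁) is finitely generated as an R-module, then N is also extended from a finitely generated R-module. -/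
open CategoryTheory TensorProduct

/-- A finitely generated `S`-module `N` is *extended* (along `R → S`) if
`N ≅ S ⊗[R] M` as `S`-modules for some finitely generated `R`-module `M`. -/
def IsExtended (R S : Type) [CommRing R] [CommRing S] [Algebra R S]
    (N : Type) [AddCommGroup N] [Module S N] : Prop :=
  ∃ (M : Type) (_ : AddCommGroup M) (_ : Module R M),
    Module.Finite R M ∧ Nonempty (N ≃ₗ[S] S ⊗[R] M)

/-- There is a surjection `P → X` from a projective module with kernel `K` such that the cokernel of
`Hom(P, Y) → Hom(K, Y)` embeds in `Ext¹(X, Y)`. -/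
theorem exists_linearMap_ext_one_of_projective (S : Type) [CommRing S] (X Y : ModuleCat.{0} S) :
    ∃ (P : ModuleCat.{0} S) (_ : Module.Projective S P) (ε : P →ₗ[S] X)
      (Ψ : (LinearMap.ker ε →ₗ[S] Y) →ₗ[S]
        ((Ext S (ModuleCat.{0} S) 1).obj (Opposite.op X)).obj Y),
      Function.Surjective ε ∧
        ∀ h, Ψ h = 0 → ∃ t : P →ₗ[S] Y, t ∘ₗ (LinearMap.ker ε).subtype = h := by
  let Q := projectiveResolution X
  let C := Q.complex.linearYonedaObj S Y
  let ε : Q.complex.X 0 ⟶ X := Q.π.f 0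
  have hdε : Q.complex.d 1 0 ≫ ε = 0 := Q.complex_d_comp_π_f_zero
  have hex : (ShortComplex.mk _ _ hdε).Exact := Q.exact₀
  have hsurj : Function.Surjective ε.hom :=
    (ModuleCat.epi_iff_surjective ε).1 (inferInstanceAs (Epi (Q.π.f 0)))
  let π : Q.complex.X 1 →ₗ[S] LinearMap.ker ε.hom :=
    (Q.complex.d 1 0).hom.codRestrict _ fun x => by
      simpa using congr($hdε x)
  have hπ : Function.Surjective π := by
    rintro ⟨x, hx⟩
    obtain ⟨y, hy⟩ := (ShortComplex.moduleCat_exact_iff _).1 hex x hx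
    exact ⟨y, Subtype.ext hy⟩
  let k : ModuleCat.of S (LinearMap.ker ε.hom →ₗ[S] Y) ⟶ C.X 1 :=
    ModuleCat.ofHom (Y := (Q.complex.X 1 ⟶ Y : Type))
      { toFun := fun h => ModuleCat.ofHom (h ∘ₗ π)
        map_add' := fun _ _ => rfl
        map_smul' := fun _ _ => rfl }
  have hk : k ≫ C.d 1 2 = 0 := by
    ext h
    change Q.complex.d 2 1 ≫ ModuleCat.ofHom (h ∘ₗ π) = 0
    ext x
    change h (π (Q.complex.d 2 1 x)) = 0
    have : π (Q.complex.d 2 1 x) = 0 :=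
      Subtype.ext congr($(Q.complex.d_comp_d 2 1 0) x)
    rw [this, map_zero]
  refine ⟨Q.complex.X 0, ?_, ε.hom,
    (C.liftCycles k 2 (by simp) hk ≫ C.homologyπ 1 ≫ (Q.isoExt 1 Y).inv).hom, hsurj,
    fun h hh => ?_⟩
  · exact (IsProjective.iff_projective _).2 (Q.projective 0)
  have h0 : C.homologyπ 1 (C.liftCycles k 2 (by simp) hk h) = 0 := by
    apply (ModuleCat.mono_iff_injective (Q.isoExt (R := S) 1 Y).inv).1 inferInstance
    rw [map_zero]
    exact hh
  have hC : (ShortComplex.mk _ _ (C.toCycles_comp_homologyπ 0 1)).Exact :=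
    ShortComplex.exact_of_g_is_cokernel _ (C.homologyIsCokernel 0 1 (by simp))
  obtain ⟨t, ht⟩ := (ShortComplex.moduleCat_exact_iff _).1 hC _ h0
  have ht' : C.d 0 1 t = k h := by
    rw [← C.toCycles_i 0 1, ← C.liftCycles_i k 2 (by simp) hk]
    exact congr(C.iCycles 1 $ht)
  refine ⟨ModuleCat.Hom.hom (show Q.complex.X 0 ⟶ Y from t), ?_⟩
  rw [← LinearMap.cancel_right hπ]
  ext x
  exact congr(ModuleCat.Hom.hom (show Q.complex.X 1 ⟶ Y from $ht') x)

/-- For every short exact sequence `0 → K → F → X → 0` with `F` projective, the cokernel of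
`Hom(F, Y) → Hom(K, Y)` embeds in `Ext¹(X, Y)`. -/
theorem exists_linearMap_ext_one {S : Type} [CommRing S] (X Y : Type) {F K : Type}
    [AddCommGroup X] [AddCommGroup Y] [AddCommGroup F] [AddCommGroup K]
    [Module S X] [Module S Y] [Module S F] [Module S K] [Module.Projective S F]
    {i : K →ₗ[S] F} {p : F →ₗ[S] X} (hi : Function.Injective i) (hip : Function.Exact i p)
    (hp : Function.Surjective p) :
    ∃ Φ : (K →ₗ[S] Y) →ₗ[S] ((Ext S (ModuleCat.{0} S) 1).obj
        (Opposite.op (ModuleCat.of S X))).obj (ModuleCat.of S Y),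
      ∀ h, Φ h = 0 → ∃ t : F →ₗ[S] Y, t ∘ₗ i = h := by
  obtain ⟨P, _, ε, Ψ, hε, hΨ⟩ :=
    exists_linearMap_ext_one_of_projective S (ModuleCat.of S X) (ModuleCat.of S Y)
  obtain ⟨a, ha⟩ := Module.projective_lifting_property p ε hp
  obtain ⟨b, hb⟩ := Module.projective_lifting_property ε p hε
  let e : K ≃ₗ[S] LinearMap.ker p :=
    LinearEquiv.ofInjective i hi ≪≫ₗ LinearEquiv.ofEq _ _ (LinearMap.exact_iff.1 hip).symm
  have he : ∀ y, i (e.symm y) = y := fun y => by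
    obtain ⟨x, rfl⟩ := e.surjective y
    rw [e.symm_apply_apply]
    rfl
  let c : LinearMap.ker ε →ₗ[S] K := e.symm.toLinearMap ∘ₗ
    (a ∘ₗ (LinearMap.ker ε).subtype).codRestrict _ fun x => by
      simpa using congr($ha x)
  have hc : ∀ x, i (c x) = a x := fun x => he _
  refine ⟨Ψ ∘ₗ LinearMap.lcomp S Y c, fun h hh => ?_⟩
  obtain ⟨t, ht⟩ := hΨ _ hh
  let d : F →ₗ[S] K := e.symm.toLinearMap ∘ₗ
    (LinearMap.id - a ∘ₗ b).codRestrict _ fun x => by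
      have h1 := congr($ha (b x))
      have h2 := congr($hb x)
      simp only [LinearMap.comp_apply] at h1 h2
      simp [h1, h2]
  have hd : ∀ x, i (d x) = x - a (b x) := fun x => he _
  refine ⟨t ∘ₗ b + h ∘ₗ d, LinearMap.ext fun x => ?_⟩
  have hbx : b (i x) ∈ LinearMap.ker ε := by
    have := congr($hb (i x))
    simp only [LinearMap.comp_apply] at this
    rw [LinearMap.mem_ker, this, hip.apply_apply_eq_zero]
  have h1 : t (b (i x)) = h (c ⟨_, hbx⟩) := congr($ht ⟨_, hbx⟩)
  have h2 : c ⟨_, hbx⟩ + d (i x) = x := hi (by simp [hc, hd])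
  simp only [LinearMap.comp_apply, LinearMap.add_apply, h1]
  rw [← map_add, h2]

/-- If `A` is generated over `S` by the image of the `R`-module `B`, then every `S`-linear map from
`A` to an `S`-module that is finite over `R` takes all its values on that image. -/
theorem exists_eq_of_span_eq_top {R S : Type*} [CommRing R] [CommRing S]
    [IsNoetherianRing R] [IsLocalRing R] [IsLocalRing S] [Algebra R S]
    (h1 : (IsLocalRing.maximalIdeal R).map (algebraMap R S) = IsLocalRing.maximalIdeal S)
    (h2 : ∀ s : S, ∃ r : R, s - algebraMap R S r ∈ IsLocalRing.maximalIdeal S)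
    {A B E : Type*} [AddCommGroup A] [AddCommGroup B] [AddCommGroup E] [Module R A] [Module S A]
    [IsScalarTower R S A] [Module R B] [Module R E] [Module S E] [IsScalarTower R S E]
    [Module.Finite R E] (Φ : A →ₗ[S] E) (β : B →ₗ[R] A)
    (hβ : Submodule.span S (Set.range β) = ⊤) (a : A) : ∃ b, Φ (β b) = Φ a := by
  let G : Submodule R E := LinearMap.range (Φ.restrictScalars R)
  let H : Submodule R E := LinearMap.range (Φ.restrictScalars R ∘ₗ β)
  have hm : ∀ s ∈ IsLocalRing.maximalIdeal S, ∀ x ∈ G, s • x ∈ IsLocalRing.maximalIdeal R • G := by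
    rintro s hs _ ⟨x, rfl⟩
    rw [← h1] at hs
    induction hs using Submodule.span_induction generalizing x with
    | mem s hs =>
      obtain ⟨r, hr, rfl⟩ := hs
      rw [algebraMap_smul]
      exact Submodule.smul_mem_smul hr ⟨x, rfl⟩
    | zero => simp
    | add s t _ _ hs ht =>
      rw [add_smul]
      exact add_mem (hs x) (ht x)
    | smul s t _ ht =>
      rw [smul_eq_mul, mul_comm, mul_smul]
      simpa using ht (s • x)
  have key : G ≤ H ⊔ IsLocalRing.maximalIdeal R • G := by
    rintro _ ⟨x, rfl⟩
    have hx : x ∈ Submodule.span S (Set.range β) := hβ ▸ Submodule.mem_top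
    induction hx using Submodule.closure_induction with
    | zero => simp
    | add x y _ _ hx hy =>
      rw [map_add]
      exact add_mem hx hy
    | smul_mem s x hx =>
      obtain ⟨b, rfl⟩ := hx
      obtain ⟨r, hr⟩ := h2 s
      have : Φ (s • β b) = Φ (β (r • b)) + (s - algebraMap R S r) • Φ (β b) := by
        simp [sub_smul]
      change Φ (s • β b) ∈ _
      rw [this]
      exact Submodule.add_mem_sup ⟨_, rfl⟩ (hm _ hr _ ⟨_, rfl⟩)
  have hle : G ≤ H := Submodule.le_of_le_smul_of_le_jacobson_bot (IsNoetherian.noetherian G)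
    (IsLocalRing.maximalIdeal_le_jacobson _) key
  exact hle ⟨a, rfl⟩

/-- Pushing out the presentation `K → F` of an extension along a map defined over `R` exhibits
the extension as a base change. -/
theorem isExtended_of_baseChange_presentation {R S : Type} [CommRing R] [CommRing S] [Algebra R S]
    {F K M₁ N₁ N N₂ : Type} [AddCommGroup F] [AddCommGroup K] [AddCommGroup M₁]
    [AddCommGroup N₁] [AddCommGroup N] [AddCommGroup N₂] [Module R F] [Module R K] [Module R M₁]
    [Module S N₁] [Module S N] [Module S N₂] [Module.Finite R F] [Module.Finite R M₁]
    {f : N₁ →ₗ[S] N} {g : N →ₗ[S] N₂} (hf : Function.Injective f) (hfg : Function.Exact f g)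
    (e : N₁ ≃ₗ[S] S ⊗[R] M₁) {i : K →ₗ[R] F} {p : S ⊗[R] F →ₗ[S] N₂}
    (hip : Function.Exact (i.baseChange S) p) (hp : Function.Surjective p)
    {b : K →ₗ[R] M₁} {l : S ⊗[R] F →ₗ[S] N} (hl : g ∘ₗ l = p)
    (hb : l ∘ₗ i.baseChange S = f ∘ₗ e.symm.toLinearMap ∘ₗ b.baseChange S) :
    IsExtended R S N := by
  let j : K →ₗ[R] F × M₁ := i.prod (-b)
  let θ := TensorProduct.prodRight R S S F M₁
  let G : S ⊗[R] (F × M₁) →ₗ[S] N :=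
    l.coprod (f ∘ₗ e.symm.toLinearMap) ∘ₗ θ.toLinearMap
  have hG : ∀ z, G z = l (θ z).1 + f (e.symm (θ z).2) := fun z => by
    simp [G]
  have hθ : θ.toLinearMap ∘ₗ j.baseChange S = (i.baseChange S).prod (-b.baseChange S) := by
    ext <;> simp [θ, j, TensorProduct.tmul_neg]
  have hθ' : ∀ k, θ (j.baseChange S k) = (i.baseChange S k, -b.baseChange S k) :=
    fun k => congr($hθ k)
  have hl' : ∀ x, g (l x) = p x := fun x => congr($hl x)
  have hb' : ∀ k, l (i.baseChange S k) = f (e.symm (b.baseChange S k)) := fun k => congr($hb k)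
  have hGsurj : Function.Surjective G := fun n => by
    obtain ⟨x, hx⟩ := hp (g n)
    obtain ⟨y, hy⟩ := (hfg (n - l x)).1 (by rw [map_sub, hl', hx, sub_self])
    exact ⟨θ.symm (x, e y), by simp [hG, hy]⟩
  have hGex : Function.Exact (j.baseChange S) G := fun z => by
    constructor
    · intro hz
      rw [hG] at hz
      obtain ⟨k, hk⟩ := (hip (θ z).1).1 (by
        have := congr(g $hz)
        rwa [map_add, hl', hfg.apply_apply_eq_zero, add_zero, map_zero] at this)
      rw [← hk, hb', ← map_add, ← map_add, map_eq_zero_iff f hf, e.symm.map_eq_zero_iff] at hz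
      refine ⟨k, θ.injective ?_⟩
      rw [hθ']
      exact Prod.ext hk (neg_eq_of_add_eq_zero_right hz)
    · rintro ⟨k, rfl⟩
      rw [hG, hθ', hb']
      simp
  have hQ : Function.Exact (j.baseChange S) ((LinearMap.range j).mkQ.baseChange S) :=
    lTensor_exact S (LinearMap.exact_map_mkQ_range j) (Submodule.mkQ_surjective _)
  have hQsurj : Function.Surjective ((LinearMap.range j).mkQ.baseChange S) :=
    LinearMap.lTensor_surjective S (Submodule.mkQ_surjective _)
  exact ⟨(F × M₁) ⧸ LinearMap.range j, inferInstance, inferInstance, inferInstance,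
    ⟨(hGex.linearEquivOfSurjective hGsurj).symm ≪≫ₗ hQ.linearEquivOfSurjective hQsurj⟩⟩

theorem stmt_18 (R S : Type) [CommRing R] [CommRing S]
    [IsNoetherianRing R] [IsNoetherianRing S] [IsLocalRing R] [IsLocalRing S]
    [Algebra R S] [Module.Flat R S] [IsLocalHom (algebraMap R S)]
    (h1 : (IsLocalRing.maximalIdeal R).map (algebraMap R S) = IsLocalRing.maximalIdeal S)
    (h2 : ∀ s : S, ∃ r : R, s - algebraMap R S r ∈ IsLocalRing.maximalIdeal S)
    (N₁ N N₂ : Type) [AddCommGroup N₁] [AddCommGroup N] [AddCommGroup N₂]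
    [Module S N₁] [Module S N] [Module S N₂]
    [Module.Finite S N₁] [Module.Finite S N] [Module.Finite S N₂]
    (f : N₁ →ₗ[S] N) (g : N →ₗ[S] N₂)
    (hf : Function.Injective f) (hg : Function.Surjective g)
    (hexact : Function.Exact f g)
    (hN₁ : IsExtended R S N₁) (hN₂ : IsExtended R S N₂)
    (hext : Module.Finite R (RestrictScalars R S
      (((Ext S (ModuleCat S) 1).obj (Opposite.op (ModuleCat.of S N₂))).obj
        (ModuleCat.of S N₁)))) :
    IsExtended R S N := by
  obtain ⟨M₁, _, _, _, ⟨e₁⟩⟩ := hN₁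
  obtain ⟨M₂, _, _, _, ⟨e₂⟩⟩ := hN₂
  obtain ⟨n, q, hq⟩ := Module.Finite.exists_fin' R M₂
  let K := LinearMap.ker q
  let i := K.subtype.baseChange S
  let p : S ⊗[R] (Fin n → R) →ₗ[S] N₂ := e₂.symm.toLinearMap ∘ₗ q.baseChange S
  have hi : Function.Injective i :=
    Module.Flat.lTensor_preserves_injective_linearMap _ K.injective_subtype
  have hp : Function.Surjective p := e₂.symm.surjective.comp (LinearMap.lTensor_surjective S hq)
  have hip : Function.Exact i p :=
    (lTensor_exact S (LinearMap.exact_subtype_ker_map q) hq).comp_injective _ e₂.symm.injective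
      (map_zero e₂.symm)
  obtain ⟨Φ, hΦ⟩ := exists_linearMap_ext_one N₂ N₁ hi hip hp
  obtain ⟨l, hl⟩ := Module.projective_lifting_property g p hg
  let ef : N₁ ≃ₗ[S] LinearMap.ker g :=
    LinearEquiv.ofInjective f hf ≪≫ₗ LinearEquiv.ofEq _ _ (LinearMap.exact_iff.1 hexact).symm
  have hgli : g ∘ₗ l ∘ₗ i = 0 := by
    rw [← LinearMap.comp_assoc, hl, hip.linearMap_comp_eq_zero]
  let h : S ⊗[R] K →ₗ[S] N₁ :=
    ef.symm.toLinearMap ∘ₗ (l ∘ₗ i).codRestrict _ fun x => congr($hgli x)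
  have hfh : f ∘ₗ h = l ∘ₗ i := LinearMap.ext fun x =>
    congrArg Subtype.val (ef.apply_symm_apply _)
  let E := ((Ext S (ModuleCat S) 1).obj (Opposite.op (ModuleCat.of S N₂))).obj (ModuleCat.of S N₁)
  let _ : Module R E := Module.compHom E (algebraMap R S)
  have : IsScalarTower R S E := IsScalarTower.of_compHom R S E
  have : Module.Finite R E := hext
  let Φ' : (S ⊗[R] K →ₗ[S] S ⊗[R] M₁) →ₗ[S] E := Φ ∘ₗ e₁.symm.toLinearMap.compRight S
  have : Module.FinitePresentation R K := Module.finitePresentation_of_finite R K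
  have hspan : Submodule.span S (Set.range (LinearMap.baseChangeHom R S K M₁)) = ⊤ := by
    refine Submodule.eq_top_iff'.2 fun x => ?_
    induction x using (Module.FinitePresentation.isBaseChange_map R K M₁ S).inductionOn with
    | zero => exact zero_mem _
    | tmul m => exact Submodule.subset_span ⟨m, rfl⟩
    | smul s x hx => exact Submodule.smul_mem _ s hx
    | add x y hx hy => exact add_mem hx hy
  obtain ⟨b, hb⟩ := exists_eq_of_span_eq_top h1 h2 Φ' _ hspan (e₁.toLinearMap ∘ₗ h)
  obtain ⟨t, ht⟩ := hΦ (h - e₁.symm.toLinearMap ∘ₗ b.baseChange S) (by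
    rw [map_sub, sub_eq_zero]
    have : e₁.symm.toLinearMap ∘ₗ e₁.toLinearMap ∘ₗ h = h := by ext; simp
    exact ((congrArg Φ this).symm.trans hb.symm))
  refine isExtended_of_baseChange_presentation hf hexact e₁ (i := K.subtype) hip hp
    (b := b) (l := l - f ∘ₗ t) ?_ ?_
  · rw [LinearMap.comp_sub, ← LinearMap.comp_assoc, hexact.linearMap_comp_eq_zero,
      LinearMap.zero_comp, sub_zero, hl]
  · change (l - f ∘ₗ t) ∘ₗ i = _
    rw [LinearMap.sub_comp, LinearMap.comp_assoc, ht, LinearMap.comp_sub, hfh, sub_sub_cancel]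
end

section
/- Let φ: R → S be a flat local homomorphism of Noetherian local rings, and suppose S is separable over R, i.e., the multiplication map S ⊗_R S → S splits as a map of S⊗_RS-modules. Then every finitely generated S-module N is a direct summand of an extended module: there is a finitely generated R-module M such that N is a direct summand of S ⊗_R M as an S-module. -/
open TensorProduct

section Separable

variable {R S N : Type*} [CommRing R] [CommRing S] [Algebra R S]
  [AddCommGroup N] [Module R N]

/-- An `S`-linear map from a finite module to `S ⊗[R] N` has range contained in the image of
`S ⊗[R] M` for some finitely generated `R`-submodule `M` of `N`. -/
lemma exists_fg_range_le_range_baseChange {P : Type*} [AddCommGroup P] [Module S P]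
    [Module.Finite S P] (f : P →ₗ[S] S ⊗[R] N) :
    ∃ M : Submodule R N, M.FG ∧ LinearMap.range f ≤ LinearMap.range (M.subtype.baseChange S) := by
  obtain ⟨t, ht⟩ := (Module.Finite.fg_top : (⊤ : Submodule S P).FG)
  obtain ⟨M, hM, h⟩ := TensorProduct.exists_finite_submodule_right_of_setFinite
    (f '' t) (t.finite_toSet.image f)
  refine ⟨M, Module.Finite.iff_fg.mp hM, ?_⟩
  rw [LinearMap.range_eq_map, ← ht, Submodule.map_span, Submodule.span_le]
  exact h

variable [Module S N] [IsScalarTower R S N]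

lemma baseChange_toSpanSingleton_smul (s : S) (n : N) (z : S ⊗[R] S) :
    ((LinearMap.toSpanSingleton S N (s • n)).restrictScalars R).baseChange S z =
      ((LinearMap.toSpanSingleton S N n).restrictScalars R).baseChange S ((1 ⊗ₜ s) * z) := by
  induction z with
  | zero => simp
  | add x y hx hy => simp only [map_add, mul_add, hx, hy]
  | tmul a b => simp [smul_smul, mul_comm s b]

lemma baseChange_toSpanSingleton_add (m n : N) (z : S ⊗[R] S) :
    ((LinearMap.toSpanSingleton S N (m + n)).restrictScalars R).baseChange S z =
      ((LinearMap.toSpanSingleton S N m).restrictScalars R).baseChange S z +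
      ((LinearMap.toSpanSingleton S N n).restrictScalars R).baseChange S z := by
  induction z with
  | zero => simp
  | add x y hx hy => simp only [map_add, hx, hy]; abel
  | tmul a b => simp [tmul_add]

/-- The `S`-linear map `N → S ⊗[R] N`, `n ↦ ∑ aᵢ ⊗ bᵢ • n`, attached to an element
`e = ∑ aᵢ ⊗ bᵢ` on which the two actions of `S` agree. -/
noncomputable def sectionOfCentral (e : S ⊗[R] S)
    (he : ∀ s : S, ((1 : S) ⊗ₜ[R] s) * e = (s ⊗ₜ[R] (1 : S)) * e) : N →ₗ[S] S ⊗[R] N where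
  toFun n := ((LinearMap.toSpanSingleton S N n).restrictScalars R).baseChange S e
  map_add' m n := baseChange_toSpanSingleton_add m n e
  map_smul' s n := by
    have h : (s ⊗ₜ[R] (1 : S)) * e = s • e := by
      rw [Algebra.smul_def, Algebra.TensorProduct.algebraMap_apply, Algebra.algebraMap_self_apply]
    rw [baseChange_toSpanSingleton_smul, he, h, map_smul, RingHom.id_apply]

/-- The action map `S ⊗[R] N → N`. -/
noncomputable def actionMap (R S N : Type*) [CommRing R] [CommRing S] [Algebra R S]
    [AddCommGroup N] [Module R N] [Module S N] [IsScalarTower R S N] : S ⊗[R] N →ₗ[S] N :=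
  (LinearMap.id : N →ₗ[R] N).liftBaseChange S

lemma actionMap_baseChange_toSpanSingleton (n : N) (z : S ⊗[R] S) :
    actionMap R S N (((LinearMap.toSpanSingleton S N n).restrictScalars R).baseChange S z) =
      Algebra.TensorProduct.lmul' R z • n := by
  induction z with
  | zero => simp
  | add x y hx hy => simp only [map_add, add_smul, hx, hy]
  | tmul a b => simp [actionMap, smul_smul]

end Separable

theorem stmt_19 (R S : Type) [CommRing R] [CommRing S]
    [IsNoetherianRing R] [IsNoetherianRing S] [IsLocalRing R] [IsLocalRing S]
    [Algebra R S] [Module.Flat R S] [IsLocalHom (algebraMap R S)]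
    -- separability: the multiplication map S ⊗[R] S → S splits S⊗S-linearly
    (hsep : ∃ σ : S →ₗ[R] S ⊗[R] S,
      (∀ x : S, Algebra.TensorProduct.lmul' R (σ x) = x) ∧
      (∀ (z : S ⊗[R] S) (x : S), σ (Algebra.TensorProduct.lmul' R z * x) = z * σ x))
    (N : Type) [AddCommGroup N] [Module S N] [Module.Finite S N] :
    ∃ (M : Type) (_ : AddCommGroup M) (_ : Module R M),
      Module.Finite R M ∧
      ∃ (i : N →ₗ[S] S ⊗[R] M) (p : S ⊗[R] M →ₗ[S] N), p.comp i = LinearMap.id := by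
  obtain ⟨σ, hσ, hlin⟩ := hsep
  let _ : Module R N := Module.compHom N (algebraMap R S)
  have _ : IsScalarTower R S N := IsScalarTower.of_algebraMap_smul fun _ _ => rfl
  have he (s : S) : ((1 : S) ⊗ₜ[R] s) * σ 1 = (s ⊗ₜ[R] (1 : S)) * σ 1 := by
    rw [← hlin, ← hlin]
    simp
  let f : N →ₗ[S] S ⊗[R] N := sectionOfCentral (σ 1) he
  have hf (n : N) : actionMap R S N (f n) = n :=
    (actionMap_baseChange_toSpanSingleton n (σ 1)).trans (by rw [hσ, one_smul])
  obtain ⟨M, hM, hfM⟩ := exists_fg_range_le_range_baseChange f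
  let g : S ⊗[R] M →ₗ[S] S ⊗[R] N := M.subtype.baseChange S
  have hg : Function.Injective g :=
    Module.Flat.lTensor_preserves_injective_linearMap M.subtype M.injective_subtype
  let i : N →ₗ[S] S ⊗[R] M := (LinearEquiv.ofInjective g hg).symm.toLinearMap.comp
    (f.codRestrict (LinearMap.range g) fun n => hfM ⟨n, rfl⟩)
  have hi (n : N) : g (i n) = f n :=
    congrArg Subtype.val ((LinearEquiv.ofInjective g hg).apply_symm_apply _)
  refine ⟨M, inferInstance, inferInstance, Module.Finite.iff_fg.mpr hM, i,
    (actionMap R S N).comp g, LinearMap.ext fun n => ?_⟩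
  simp only [LinearMap.comp_apply, hi, hf, LinearMap.id_apply]
end
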